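/- Let σ ∈ (0,√2). There exist T > 2 large enough and a constant c > 0, both uniform (independent of s, t, ψ, g), such that: for any s < −T, any continuous g with finite C_Φ norm on (s,−T)×(0,∞), and any ψ with finite C_Φ norm on (s,−T)×(0,∞), there exists d(t) = (d_1(t),…,d_k(t)) solving the projection system for every t ∈ (s,−T); moreover, for every i = 1,…,k and t ∈ [s,−T]: |d_i(t)| ≤ c (log|t|/|t|)^{(√2+σ)/(2√2)} ‖ψ‖_{C_Φ((s,−T)×(0,∞))} + c (log|t|/|t|)^{σ/√2} ‖g‖_{C_Φ((s,−T)×(0,∞))}, and |d_i(t) w′(r − ρ_i(t))/Φ(t,r)| ≤ c (log|t|/|t|)^{1/2} ‖ψ‖_{C_Φ((s,−T)×(0,∞))} + c ‖g‖_{C_Φ((s,−T)×(0,∞))} for all r > 1. -/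

import Mathlib

open Real MeasureTheory

noncomputable section

/-- The heteroclinic profile `w(s) = tanh(s/√2)`. -/
def w (s : ℝ) : ℝ := Real.tanh (s / Real.sqrt 2)

/-- `w' `. -/
def w1 (s : ℝ) : ℝ := deriv w s

/-- `w''`. -/
def w2 (s : ℝ) : ℝ := deriv w1 s

/-- The Allen–Cahn nonlinearity `f(v) = v(1-v²)`. -/
def f (v : ℝ) : ℝ := v * (1 - v ^ 2)

/-- `f'`. -/
def f1 (v : ℝ) : ℝ := deriv f v

/-- The interaction constant `β`. -/
def β : ℝ :=
  (6 * ∫ x : ℝ, Real.exp (Real.sqrt 2 * x) * (1 - w x ^ 2) * w1 x) / ∫ x : ℝ, w1 x ^ 2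

/-- `r(y) = (1+y²)^{1/(2(N-1))}`. -/
def Rr (N : ℕ) (y : ℝ) : ℝ := (1 + y ^ 2) ^ ((1 : ℝ) / (2 * ((N : ℝ) - 1)))

/-- `b_l = -(1/√2) log((k-l)l/(2β))`. -/
def bco (k l : ℕ) : ℝ :=
  -(1 / Real.sqrt 2) * Real.log (((k : ℝ) - (l : ℝ)) * (l : ℝ) / (2 * β))

/-- `ρ⁰_j(t) = √(-2(N-1)t) + (j-(k+1)/2) η(t) + γ_j`. -/
def rho0 (N k : ℕ) (η : ℝ → ℝ) (γ : ℕ → ℝ) (j : ℕ) (t : ℝ) : ℝ :=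
  Real.sqrt (-2 * ((N : ℝ) - 1) * t) + ((j : ℝ) - ((k : ℝ) + 1) / 2) * η t + γ j

/-- `ρ_j = ρ⁰_j + h_j`. -/
def rho (N k : ℕ) (η : ℝ → ℝ) (γ : ℕ → ℝ) (h : ℕ → ℝ → ℝ) (j : ℕ) (t : ℝ) : ℝ :=
  rho0 N k η γ j t + h j t

/-- `z(t,r) = ∑_{j=1}^k (-1)^{j+1} w(r-ρ_j(t)) - 1`. -/
def zfun (N k : ℕ) (η : ℝ → ℝ) (γ : ℕ → ℝ) (h : ℕ → ℝ → ℝ) (t r : ℝ) : ℝ :=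
  (∑ j ∈ Finset.Icc 1 k, (-1 : ℝ) ^ (j + 1) * w (r - rho N k η γ h j t)) - 1

/-- The standing assumptions: `N ≥ 2`, `k ≥ 2` even, `η` solves the simple ODE with `η(-1)=0`,
and `γ` is defined through the constants `b_l`. -/
structure Setting (N k : ℕ) (η : ℝ → ℝ) (γ : ℕ → ℝ) : Prop where
  hN : 2 ≤ N
  hk : 2 ≤ k
  hkeven : Even k
  hηdiff : ∀ t ≤ (-1 : ℝ), DifferentiableAt ℝ η t
  hηode : ∀ t ≤ (-1 : ℝ),
    deriv η t + η t / (2 * t) + β * Real.exp (-Real.sqrt 2 * η t) = 0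
  hηinit : η (-1) = 0
  hγ : ∀ j : ℕ, 1 ≤ j → j ≤ k / 2 →
    γ j = -(1 / 2) * (∑ i ∈ Finset.Icc j (k - j), bco k i) ∧
    γ (k - j + 1) = (1 / 2) * (∑ i ∈ Finset.Icc j (k - j), bco k i)

/-- `h = (h_1,…,h_k)` is C¹ on `(-∞,-T]` with
`sup_{t≤-T}|h(t)| + sup_{t≤-T}(|t|/log|t|)|h'(t)| < 1`. -/
def SmallH (k : ℕ) (T : ℝ) (h : ℕ → ℝ → ℝ) : Prop :=
  (∀ j ∈ Finset.Icc 1 k, ∀ t ≤ -T, DifferentiableAt ℝ (h j) t) ∧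
  ∃ A B : ℝ, A + B < 1 ∧
    (∀ j ∈ Finset.Icc 1 k, ∀ t ≤ -T, |h j t| ≤ A) ∧
    (∀ j ∈ Finset.Icc 1 k, ∀ t ≤ -T, |t| / Real.log |t| * |deriv (h j) t| ≤ B)

/-- The weight `Φ(t,r)`, defined piecewise (with the convention `ρ⁰_{k+1} = +∞`). -/
def IsPhi (N k : ℕ) (η : ℝ → ℝ) (γ : ℕ → ℝ) (σ : ℝ) (Φ : ℝ → ℝ → ℝ) : Prop :=
  (∀ t r : ℝ, 1 < r → r ≤ (rho0 N k η γ 1 t + rho0 N k η γ 2 t) / 2 →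
      Φ t r = Real.exp (σ * (r - rho0 N k η γ 2 t))) ∧
  (∀ t r : ℝ, ∀ j : ℕ, 2 ≤ j → j < k →
      (rho0 N k η γ j t + rho0 N k η γ (j - 1) t) / 2 < r →
      r ≤ (rho0 N k η γ j t + rho0 N k η γ (j + 1) t) / 2 →
      Φ t r = Real.exp (σ * (-r + rho0 N k η γ (j - 1) t)) +
        Real.exp (σ * (r - rho0 N k η γ (j + 1) t))) ∧
  (∀ t r : ℝ, (rho0 N k η γ k t + rho0 N k η γ (k - 1) t) / 2 < r →
      Φ t r = Real.exp (σ * (-r + rho0 N k η γ (k - 1) t)))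

/-- The error term `E`. -/
def Eterm (N k : ℕ) (η : ℝ → ℝ) (γ : ℕ → ℝ) (h : ℕ → ℝ → ℝ) (t y : ℝ) : ℝ :=
  (∑ i ∈ Finset.Icc 1 k, (-1 : ℝ) ^ (i + 1) *
    (w1 (Rr N y - rho N k η γ h i t) * (deriv (rho N k η γ h i) t + ((N : ℝ) - 1) / Rr N y)
      - f (w (Rr N y - rho N k η γ h i t))
      - w2 (Rr N y - rho N k η γ h i t) / (1 + y ^ 2))) +
  f (zfun N k η γ h t (Rr N y))

/-- The set of values `|u|/Φ` over `I × (0,∞)`. -/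
def CSet (N : ℕ) (Φ : ℝ → ℝ → ℝ) (I : Set ℝ) (u : ℝ → ℝ → ℝ) : Set ℝ :=
  (fun p : ℝ × ℝ => |u p.1 p.2| / Φ p.1 (Rr N p.2)) '' (I ×ˢ Set.Ioi (0 : ℝ))

/-- The norm `‖u‖_{C_Φ(I×(0,∞))}`. -/
def CNorm (N : ℕ) (Φ : ℝ → ℝ → ℝ) (I : Set ℝ) (u : ℝ → ℝ → ℝ) : ℝ :=
  sSup (CSet N Φ I u)

/-- The divergence form elliptic operator `L`. -/
def Lop (N : ℕ) (v : ℝ → ℝ → ℝ) (t y : ℝ) : ℝ :=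
  ((N : ℝ) - 1) ^ 2 * (y ^ 2 + 1) ^ (-(1 : ℝ) / (2 * ((N : ℝ) - 1))) *
    deriv (fun s => (s ^ 2 + 1) ^ ((2 * (N : ℝ) - 3) / (2 * ((N : ℝ) - 1))) * deriv (v t) s) y

/-- `d = (d_1,…,d_k)` solves, at time `t`, the (nearly diagonal) projection system associated to
`ψ`, the profile locations `ρ`, the profile `z` and the forcing `g`. -/
def ProjSystem (N k : ℕ) (ρ : ℕ → ℝ → ℝ) (z : ℝ → ℝ → ℝ) (ψ g : ℝ → ℝ → ℝ)
    (d : ℕ → ℝ → ℝ) (t : ℝ) : Prop :=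
  ∀ j ∈ Finset.Icc 1 k,
    (∑ i ∈ Finset.Icc 1 k, d i t * ∫ y in Set.Ioi (0 : ℝ),
        w1 (Rr N y - ρ i t) * w1 (Rr N y - ρ j t) * Rr N y) =
      -deriv (ρ j) t * (∫ y in Set.Ioi (0 : ℝ), ψ t y * w2 (Rr N y - ρ j t) * Rr N y) +
      ((N : ℝ) - 1) *
        (∫ y in Set.Ioi (0 : ℝ), ψ t y * deriv (fun s => w2 (Rr N s - ρ j t) * s) y) +
      (∫ y in Set.Ioi (0 : ℝ), f1 (z t (Rr N y)) * ψ t y * w1 (Rr N y - ρ j t) * Rr N y) +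
      (∫ y in Set.Ioi (0 : ℝ), g t y * w1 (Rr N y - ρ j t) * Rr N y)

/-- The orthogonality conditions at time `t`. -/
def Orth (N k : ℕ) (ρ : ℕ → ℝ → ℝ) (ψ : ℝ → ℝ → ℝ) (t : ℝ) : Prop :=
  ∀ i ∈ Finset.Icc 1 k, (∫ y in Set.Ioi (0 : ℝ), ψ t y * w1 (Rr N y - ρ i t) * Rr N y) = 0

/-- The nonlinear term `N(ψ,h)`. -/
def Nterm (N k : ℕ) (η : ℝ → ℝ) (γ : ℕ → ℝ) (h : ℕ → ℝ → ℝ) (ψ : ℝ → ℝ → ℝ) (t y : ℝ) : ℝ :=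
  f (zfun N k η γ h t (Rr N y) + ψ t y) - f (zfun N k η γ h t (Rr N y)) -
    f1 (zfun N k η γ h t (Rr N y)) * ψ t y

/-- The norm `‖h‖_Λ = sup_{t≤-T}|h(t)| + sup_{t≤-T}(|t|/log|t|)|h'(t)|`
(with the sup norm on vectors). -/
def LamNorm (k : ℕ) (T : ℝ) (h : ℕ → ℝ → ℝ) : ℝ :=
  sSup {a : ℝ | ∃ j ∈ Finset.Icc 1 k, ∃ t ≤ -T, a = |h j t|} +
  sSup {a : ℝ | ∃ j ∈ Finset.Icc 1 k, ∃ t ≤ -T, a = |t| / Real.log |t| * |deriv (h j) t|}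

end

/-! ### The heteroclinic profile -/

theorem w_eq (s : ℝ) : w s = 1 - 2 / (exp (√2 * s) + 1) := by
  have hs : s / √2 + s / √2 = √2 * s := by
    have h2 : (√2 : ℝ) ^ 2 = 2 := Real.sq_sqrt (by norm_num)
    field_simp
    linear_combination (-s) * h2
  have h1 : exp (√2 * s) = exp (s / √2) * exp (s / √2) := by rw [← exp_add, hs]
  have h2 : exp (-(s / √2)) = 1 / exp (s / √2) := by rw [exp_neg, one_div]
  have h3 := exp_pos (s / √2)
  rw [w, Real.tanh_eq, h1, h2]
  field_simp
  ring

theorem hasDerivAt_w (s : ℝ) : HasDerivAt w ((1 - w s ^ 2) / √2) s := by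
  have hw : w = fun s => 1 - 2 / (exp (√2 * s) + 1) := funext w_eq
  have hE : HasDerivAt (fun s : ℝ => exp (√2 * s) + 1) (exp (√2 * s) * (√2 * 1)) s :=
    (((hasDerivAt_id s).const_mul √2).exp).add_const 1
  have hpos := exp_pos (√2 * s)
  have hq := ((hasDerivAt_const s (2 : ℝ)).div hE (by positivity)).const_sub 1
  rw [w_eq s, hw]
  refine hq.congr_deriv ?_
  have h2 : (√2 : ℝ) ^ 2 = 2 := Real.sq_sqrt (by norm_num)
  have h2' : (0 : ℝ) < √2 := by positivity
  field_simp
  linear_combination (2 * exp (√2 * s)) * h2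

theorem w1_eq (s : ℝ) : w1 s = (1 - w s ^ 2) / √2 := (hasDerivAt_w s).deriv

theorem hasDerivAt_w' (s : ℝ) : HasDerivAt w (w1 s) s := w1_eq s ▸ hasDerivAt_w s

theorem hasDerivAt_w1 (s : ℝ) : HasDerivAt w1 (-√2 * w s * w1 s) s := by
  have hw1 : w1 = fun s => (1 - w s ^ 2) / √2 := funext w1_eq
  have hq := (((hasDerivAt_w' s).pow 2).const_sub 1).div_const √2
  refine HasDerivAt.congr_deriv (f := w1) (by rw [hw1]; exact hq) ?_
  rw [w1_eq]
  have h2 : (√2 : ℝ) ^ 2 = 2 := Real.sq_sqrt (by norm_num)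
  have h2' : (0 : ℝ) < √2 := by positivity
  field_simp
  push_cast
  linear_combination (w s * (1 - w s ^ 2)) * h2

theorem w2_eq (s : ℝ) : w2 s = -√2 * w s * w1 s := (hasDerivAt_w1 s).deriv

theorem f1_eq (v : ℝ) : f1 v = 1 - 3 * v ^ 2 := by
  have h : HasDerivAt f (1 * (1 - v ^ 2) + v * (-(2 * v))) v := by
    have h := (hasDerivAt_id v).mul (((hasDerivAt_id v).pow 2).const_sub 1)
    exact HasDerivAt.congr_deriv (f := f) h (by simp)
  rw [f1, h.deriv]
  ring

theorem hasDerivAt_w2 (s : ℝ) : HasDerivAt w2 (-(f1 (w s) * w1 s)) s := by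
  have hw2 : w2 = fun s => -√2 * w s * w1 s := funext w2_eq
  have hq := ((hasDerivAt_w' s).const_mul (-√2)).mul (hasDerivAt_w1 s)
  refine HasDerivAt.congr_deriv (f := w2) (by rw [hw2]; exact hq) ?_
  have h2 : (√2 : ℝ) ^ 2 = 2 := Real.sq_sqrt (by norm_num)
  have h3 : √2 * w1 s = 1 - w s ^ 2 := by rw [w1_eq]; field_simp
  rw [f1_eq]
  linear_combination (-w1 s) * h3 + (w s ^ 2 * w1 s) * h2

theorem abs_w_le_one (s : ℝ) : |w s| ≤ 1 := (Real.abs_tanh_lt_one _).le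

theorem abs_w_sub_one_le (s : ℝ) : |w s - 1| ≤ 2 * exp (-√2 * s) := by
  have h := exp_pos (√2 * s)
  rw [w_eq, neg_mul, exp_neg]
  rw [show 1 - 2 / (exp (√2 * s) + 1) - 1 = -(2 / (exp (√2 * s) + 1)) by ring, abs_neg,
    abs_of_pos (by positivity), div_eq_mul_inv]
  gcongr
  linarith

theorem abs_w_add_one_le (s : ℝ) : |w s + 1| ≤ 2 * exp (√2 * s) := by
  have h := exp_pos (√2 * s)
  have h1 : w s + 1 = 2 * exp (√2 * s) / (exp (√2 * s) + 1) := by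
    rw [w_eq]; field_simp; ring
  rw [h1, abs_of_pos (by positivity)]
  exact div_le_self (by positivity) (by linarith)

theorem w1_eq_exp (s : ℝ) : w1 s = 2 * √2 * exp (√2 * s) / (exp (√2 * s) + 1) ^ 2 := by
  have h := exp_pos (√2 * s)
  have h2 : (√2 : ℝ) ^ 2 = 2 := Real.sq_sqrt (by norm_num)
  have h2' : (0 : ℝ) < √2 := by positivity
  rw [w1_eq, w_eq]
  field_simp
  linear_combination (-2 * exp (√2 * s)) * h2

theorem w1_pos (s : ℝ) : 0 < w1 s := by
  rw [w1_eq_exp]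
  positivity

theorem w1_neg (s : ℝ) : w1 (-s) = w1 s := by
  have h := exp_pos (√2 * s)
  rw [w1_eq_exp, w1_eq_exp, mul_neg, exp_neg]
  field_simp
  ring

theorem w1_abs (s : ℝ) : w1 |s| = w1 s := by
  rcases abs_choice s with h | h <;> simp [h, w1_neg]

theorem w1_le (s : ℝ) : w1 s ≤ 2 * √2 * exp (-√2 * |s|) := by
  have h := exp_pos (√2 * |s|)
  rw [← w1_abs, w1_eq_exp, neg_mul, exp_neg, div_le_iff₀ (by positivity)]
  field_simp
  nlinarith

theorem le_w1 (s : ℝ) : √2 / 2 * exp (-√2 * |s|) ≤ w1 s := by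
  have h : 1 ≤ exp (√2 * |s|) := one_le_exp (by positivity)
  rw [← w1_abs, w1_eq_exp, neg_mul, exp_neg, le_div_iff₀ (by positivity)]
  field_simp
  nlinarith

theorem abs_w2_le (s : ℝ) : |w2 s| ≤ √2 * w1 s := by
  rw [w2_eq, abs_mul, abs_mul, abs_neg, abs_of_pos (w1_pos s), abs_of_nonneg (Real.sqrt_nonneg 2)]
  have := abs_w_le_one s
  have := w1_pos s
  gcongr
  exact mul_le_of_le_one_right (by positivity) (abs_w_le_one s)

theorem analyticAt_w (s : ℝ) : AnalyticAt ℝ w s := by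
  rw [show w = fun s => 1 - 2 / (exp (√2 * s) + 1) from funext w_eq]
  have h := exp_pos (√2 * s)
  fun_prop (disch := positivity)

theorem analyticAt_w1 (s : ℝ) : AnalyticAt ℝ w1 s := (analyticAt_w s).deriv

theorem analyticAt_w2 (s : ℝ) : AnalyticAt ℝ w2 s := (analyticAt_w1 s).deriv

theorem tendsto_w_atTop : Filter.Tendsto w Filter.atTop (nhds 1) := by
  rw [show w = fun s => 1 - 2 / (exp (√2 * s) + 1) from funext w_eq]
  have h1 : Filter.Tendsto (fun s : ℝ => exp (√2 * s) + 1) Filter.atTop Filter.atTop :=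
    Filter.tendsto_atTop_add_const_right _ _
      (tendsto_exp_atTop.comp (Filter.tendsto_id.const_mul_atTop (by positivity)))
  simpa using (h1.const_div_atTop 2).const_sub 1

theorem w2_ne_zero {s : ℝ} (hs : s ≠ 0) : w2 s ≠ 0 := by
  have h2 : (√2 : ℝ) ≠ 0 := by positivity
  have hw : w s ≠ 0 := by
    rw [w_eq, sub_ne_zero]
    intro h
    have h0 := exp_pos (√2 * s)
    rw [eq_div_iff (by positivity)] at h
    have h1 : exp (√2 * s) = 1 := by linarith
    rw [exp_eq_one_iff] at h1
    simp_all
  rw [w2_eq]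
  exact mul_ne_zero (mul_ne_zero (neg_ne_zero.mpr h2) hw) (w1_pos s).ne'

/-! ### The interaction constant -/

theorem beta_pos : 0 < β := by
  have hc : Continuous w := continuous_iff_continuousAt.mpr fun s => (analyticAt_w s).continuousAt
  have hc1 : Continuous w1 :=
    continuous_iff_continuousAt.mpr fun s => (analyticAt_w1 s).continuousAt
  have hw : ∀ x, 1 - w x ^ 2 = √2 * w1 x := fun x => by rw [w1_eq]; field_simp
  have hexp : Integrable fun x : ℝ => exp (-√2 * |x|) :=
    integrable_inv_one_add_sq.mono' (by fun_prop) <| Filter.Eventually.of_forall fun x => by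
      have h := quadratic_le_exp_of_nonneg (show 0 ≤ √2 * |x| by positivity)
      have h2 : (√2 : ℝ) ^ 2 = 2 := Real.sq_sqrt (by norm_num)
      have h3 : 0 ≤ √2 * |x| := by positivity
      rw [Real.norm_of_nonneg (exp_pos _).le, neg_mul, exp_neg]
      gcongr
      nlinarith [sq_abs x]
  have key : ∀ x : ℝ, exp (√2 * x) * w1 x ≤ 2 * √2 := by
    intro x
    have h0 : exp (√2 * x) ≤ exp (√2 * |x|) := by gcongr; exact le_abs_self x
    calc exp (√2 * x) * w1 x ≤ exp (√2 * |x|) * (2 * √2 * exp (-√2 * |x|)) := by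
          have := w1_pos x
          gcongr
          exact w1_le x
      _ = 2 * √2 * exp (√2 * |x| + -√2 * |x|) := by rw [exp_add]; ring
      _ = 2 * √2 := by simp
  have int1 : Integrable fun x : ℝ => exp (√2 * x) * (1 - w x ^ 2) * w1 x := by
    refine (hexp.const_mul (√2 * (2 * √2) * (2 * √2))).mono' (by fun_prop)
      (Filter.Eventually.of_forall fun x => ?_)
    have := w1_pos x
    rw [hw, Real.norm_of_nonneg (by positivity)]
    calc exp (√2 * x) * (√2 * w1 x) * w1 x = √2 * (exp (√2 * x) * w1 x) * w1 x := by ring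
      _ ≤ √2 * (2 * √2) * (2 * √2 * exp (-√2 * |x|)) := by
          exact mul_le_mul (mul_le_mul_of_nonneg_left (key x) (by positivity)) (w1_le x)
            (by positivity) (by positivity)
      _ = _ := by ring
  have int2 : Integrable fun x : ℝ => w1 x ^ 2 := by
    refine (hexp.const_mul (2 * √2 * (2 * √2))).mono' (by fun_prop)
      (Filter.Eventually.of_forall fun x => ?_)
    have := w1_pos x
    have h1 : w1 x ≤ 2 * √2 := (w1_le x).trans
      (mul_le_of_le_one_right (by positivity) (by simp))
    rw [Real.norm_of_nonneg (by positivity), sq]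
    calc w1 x * w1 x ≤ 2 * √2 * (2 * √2 * exp (-√2 * |x|)) := by
          gcongr
          exact w1_le x
      _ = _ := by ring
  have pos1 : 0 < ∫ x : ℝ, exp (√2 * x) * (1 - w x ^ 2) * w1 x :=
    integral_pos_of_integrable_nonneg_nonzero (x := 0) (by fun_prop) int1
      (fun x => by have := w1_pos x; simp only [Pi.zero_apply]; rw [hw]; positivity)
      (by have := w1_pos 0; rw [hw]; positivity)
  have pos2 : 0 < ∫ x : ℝ, w1 x ^ 2 :=
    integral_pos_of_integrable_nonneg_nonzero (x := 0) (by fun_prop) int2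
      (fun x => sq_nonneg _) (by have := w1_pos 0; positivity)
  unfold β
  positivity

/-! ### The change of variables `y ↦ r(y)` -/

theorem sub_one_pos_of_two_le {N : ℕ} (hN : 2 ≤ N) : (0 : ℝ) < (N : ℝ) - 1 := by
  have : (2 : ℝ) ≤ N := by exact_mod_cast hN
  linarith

theorem Rr_pos (N : ℕ) (y : ℝ) : 0 < Rr N y := by
  unfold Rr
  positivity

theorem Rr_pow {N : ℕ} (hN : 2 ≤ N) (y : ℝ) : (Rr N y ^ (N - 1)) ^ 2 = 1 + y ^ 2 := by
  have hM := sub_one_pos_of_two_le hN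
  have hy : (0 : ℝ) ≤ 1 + y ^ 2 := by positivity
  rw [Rr, ← pow_mul, ← Real.rpow_natCast, ← Real.rpow_mul hy, Nat.cast_mul,
    Nat.cast_sub (by omega : 1 ≤ N)]
  have h : 1 / (2 * ((N : ℝ) - 1)) * (((N : ℝ) - (1 : ℕ)) * (2 : ℕ)) = 1 := by
    push_cast
    field_simp
  rw [h, Real.rpow_one]

theorem one_le_Rr {N : ℕ} (hN : 2 ≤ N) (y : ℝ) : 1 ≤ Rr N y := by
  have hM := sub_one_pos_of_two_le hN
  exact Real.one_le_rpow (by nlinarith [sq_nonneg y]) (by positivity)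

theorem one_lt_Rr {N : ℕ} (hN : 2 ≤ N) {y : ℝ} (hy : 0 < y) : 1 < Rr N y := by
  have hM := sub_one_pos_of_two_le hN
  exact Real.one_lt_rpow (by nlinarith) (by positivity)

theorem Rr_le_pow {N : ℕ} (hN : 2 ≤ N) (y : ℝ) : Rr N y ≤ Rr N y ^ (N - 1) :=
  le_self_pow₀ (one_le_Rr hN y) (by omega)

theorem Rr_zero (N : ℕ) : Rr N 0 = 1 := by simp [Rr]

theorem hasDerivAt_Rr (N : ℕ) (y : ℝ) :
    HasDerivAt (Rr N) (y * Rr N y / (((N : ℝ) - 1) * (1 + y ^ 2))) y := by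
  have h0 : (0 : ℝ) < 1 + y ^ 2 := by positivity
  have h1 : HasDerivAt (fun y : ℝ => 1 + y ^ 2) (2 * y) y := by
    simpa using (hasDerivAt_pow 2 y).const_add 1
  refine HasDerivAt.congr_deriv (f := Rr N) (h1.rpow_const (Or.inl h0.ne')) ?_
  rw [Real.rpow_sub_one h0.ne']
  rcases eq_or_ne ((N : ℝ) - 1) 0 with h | h
  · simp [h]
  · unfold Rr
    field_simp

theorem analyticAt_Rr (N : ℕ) (y : ℝ) : AnalyticAt ℝ (Rr N) y := by
  have h0 : (0 : ℝ) < 1 + y ^ 2 := by positivity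
  have h1 : Rr N = fun y : ℝ => exp (log (1 + y ^ 2) * (1 / (2 * ((N : ℝ) - 1)))) :=
    funext fun y => Real.rpow_def_of_pos (by positivity) _
  rw [h1]
  exact (((analyticAt_const.add (analyticAt_id.pow 2)).log h0).mul analyticAt_const).rexp

theorem continuous_Rr (N : ℕ) : Continuous (Rr N) :=
  continuous_iff_continuousAt.mpr fun y => (analyticAt_Rr N y).continuousAt

theorem continuous_w1 : Continuous w1 :=
  continuous_iff_continuousAt.mpr fun s => (analyticAt_w1 s).continuousAt

theorem tendsto_Rr_atTop {N : ℕ} (hN : 2 ≤ N) : Filter.Tendsto (Rr N) Filter.atTop Filter.atTop := by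
  have hM := sub_one_pos_of_two_le hN
  have h1 : Filter.Tendsto (fun y : ℝ => 1 + y ^ 2) Filter.atTop Filter.atTop :=
    Filter.tendsto_atTop_add_const_left _ _ (Filter.tendsto_pow_atTop (by norm_num))
  exact (tendsto_rpow_atTop (by positivity)).comp h1

theorem exists_one_add_pow_le (m : ℕ) {a : ℝ} (ha : 0 < a) :
    ∃ C > 0, ∀ u : ℝ, 0 ≤ u → (1 + u) ^ m ≤ C * exp (a * u) := by
  have hb : 0 < a / (m + 1) := by positivity
  refine ⟨(1 + 1 / (a / (m + 1))) ^ m, by positivity, fun u hu => ?_⟩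
  have h1 : 1 + u ≤ (1 + 1 / (a / (m + 1))) * exp (a / (m + 1) * u) := by
    have h2 := add_one_le_exp (a / (m + 1) * u)
    calc 1 + u ≤ 1 + u + (a / (m + 1) * u + 1 / (a / (m + 1))) := by
          have : 0 ≤ a / (m + 1) * u + 1 / (a / (m + 1)) := by positivity
          linarith
      _ = (1 + 1 / (a / (m + 1))) * (a / (m + 1) * u + 1) := by field_simp; ring
      _ ≤ _ := by gcongr
  calc (1 + u) ^ m ≤ ((1 + 1 / (a / (m + 1))) * exp (a / (m + 1) * u)) ^ m := by gcongr
    _ = (1 + 1 / (a / (m + 1))) ^ m * exp (m * (a / (m + 1) * u)) := by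
        rw [mul_pow, ← Real.exp_nat_mul]
    _ ≤ _ := by
        refine mul_le_mul_of_nonneg_left (exp_le_exp.mpr ?_) (by positivity)
        have : (m : ℝ) * (a / (m + 1) * u) = m / (m + 1) * (a * u) := by field_simp
        rw [this]
        exact mul_le_of_le_one_left (by positivity) (by rw [div_le_one (by positivity)]; linarith)

theorem pow_le_pow_mul_one_add_abs {r p : ℝ} (hr : 0 ≤ r) (hp : 1 ≤ p) (m : ℕ) :
    r ^ m ≤ p ^ m * (1 + |r - p|) ^ m := by
  rw [← mul_pow]
  gcongr
  nlinarith [le_abs_self (r - p), abs_nonneg (r - p)]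

theorem integral_w1_comp_Rr {N : ℕ} (hN : 2 ≤ N) {b : ℝ} (hb : 0 < b) (p : ℝ) :
    IntegrableOn (fun y => w1 (b * (Rr N y - p)) *
      (b * (y * Rr N y / (((N : ℝ) - 1) * (1 + y ^ 2))))) (Set.Ioi 0) ∧
    ∫ y in Set.Ioi (0 : ℝ), w1 (b * (Rr N y - p)) *
      (b * (y * Rr N y / (((N : ℝ) - 1) * (1 + y ^ 2)))) = 1 - w (b * (1 - p)) := by
  have hM := sub_one_pos_of_two_le hN
  have hd : ∀ y ∈ Set.Ici (0 : ℝ), HasDerivAt (fun y => w (b * (Rr N y - p)))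
      (w1 (b * (Rr N y - p)) * (b * (y * Rr N y / (((N : ℝ) - 1) * (1 + y ^ 2))))) y :=
    fun y _ => (hasDerivAt_w' _).comp y (((hasDerivAt_Rr N y).sub_const p).const_mul b)
  have hpos : ∀ y ∈ Set.Ioi (0 : ℝ), 0 ≤ w1 (b * (Rr N y - p)) *
      (b * (y * Rr N y / (((N : ℝ) - 1) * (1 + y ^ 2)))) := by
    intro y hy
    have h1 : 0 < y := hy
    have h2 := Rr_pos N y
    have h3 := w1_pos (b * (Rr N y - p))
    positivity
  have hl : Filter.Tendsto (fun y => w (b * (Rr N y - p))) Filter.atTop (nhds 1) :=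
    tendsto_w_atTop.comp ((Filter.tendsto_atTop_add_const_right _ (-p)
      (tendsto_Rr_atTop hN)).const_mul_atTop hb)
  refine ⟨integrableOn_Ioi_deriv_of_nonneg' hd hpos hl, ?_⟩
  rw [integral_Ioi_of_hasDerivAt_of_nonneg' hd hpos hl, Rr_zero]

theorem Rr_le_deriv {N : ℕ} (hN : 2 ≤ N) {y : ℝ} (hy : 0 < y) :
    Rr N y ≤ 4 * Rr N y ^ (N - 1) *
      (((N : ℝ) - 1) * (y * Rr N y / (((N : ℝ) - 1) * (1 + y ^ 2))) + (1 + y ^ 2)⁻¹) := by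
  have hM := sub_one_pos_of_two_le hN
  have hS := Rr_pow hN y
  have hr := one_le_Rr hN y
  have hrS := Rr_le_pow hN y
  set r := Rr N y
  set S := r ^ (N - 1)
  have hS0 : 0 < S := by positivity
  rw [show ((N : ℝ) - 1) * (y * r / (((N : ℝ) - 1) * (1 + y ^ 2))) + (1 + y ^ 2)⁻¹
    = (y * r + 1) / S ^ 2 by rw [hS]; field_simp]
  have key : r * S ≤ 4 * (y * r + 1) := by
    have h1 : S ≤ 1 + y := by
      refine le_of_sq_le_sq ?_ (by positivity)
      nlinarith
    rcases le_total 1 y with h | h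
    · nlinarith [mul_le_mul_of_nonneg_left h1 (by positivity : 0 ≤ r)]
    · have h2 : S ≤ 2 := by linarith
      have : r * S ≤ 2 * 2 := by gcongr; linarith
      nlinarith
  rw [show 4 * S * ((y * r + 1) / S ^ 2) = 4 * (y * r + 1) / S by field_simp, le_div_iff₀ hS0]
  exact key

theorem deriv_le_Rr {N : ℕ} (hN : 2 ≤ N) {y : ℝ} (hy : 0 < y) :
    Rr N y ^ (N - 1) * (((N : ℝ) - 1) * (y * Rr N y / (((N : ℝ) - 1) * (1 + y ^ 2)))) ≤ Rr N y := by
  have hM := sub_one_pos_of_two_le hN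
  have hS := Rr_pow hN y
  have hr := Rr_pos N y
  set r := Rr N y
  set S := r ^ (N - 1)
  have hS0 : 0 < S := by positivity
  have h1 : y ≤ S := le_of_sq_le_sq (by linarith) hS0.le
  rw [← hS, show S * (((N : ℝ) - 1) * (y * r / (((N : ℝ) - 1) * S ^ 2))) = r * (y / S) by field_simp]
  exact mul_le_of_le_one_right hr.le (by rwa [div_le_one hS0])

theorem exists_integral_exp_Rr_le {N : ℕ} (hN : 2 ≤ N) {a : ℝ} (ha : 0 < a) :
    ∃ C > 0, ∀ p : ℝ, 1 ≤ p →
      IntegrableOn (fun y => exp (-a * |Rr N y - p|) * Rr N y) (Set.Ioi 0) ∧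
      ∫ y in Set.Ioi (0 : ℝ), exp (-a * |Rr N y - p|) * Rr N y ≤ C * p ^ (N - 1) := by
  obtain ⟨C, hC, hCle⟩ := exists_one_add_pow_le (N - 1) (half_pos ha)
  have hM := sub_one_pos_of_two_le hN
  have h2 : (0 : ℝ) < √2 := by positivity
  set b : ℝ := a / (2 * √2) with hb
  have hb0 : 0 < b := by positivity
  refine ⟨4 * C * (((N : ℝ) - 1) / b * √2 * 2 + π), by positivity, fun p hp => ?_⟩
  obtain ⟨hi, hI⟩ := integral_w1_comp_Rr hN hb0 p
  set D : ℝ → ℝ := fun y => w1 (b * (Rr N y - p)) *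
      (b * (y * Rr N y / (((N : ℝ) - 1) * (1 + y ^ 2)))) with hD
  have hi2 : IntegrableOn (fun y : ℝ => (1 + y ^ 2)⁻¹) (Set.Ioi 0) :=
    integrable_inv_one_add_sq.integrableOn
  have hG : IntegrableOn (fun y => 4 * C * p ^ (N - 1) *
      (((N : ℝ) - 1) / b * √2 * D y + (1 + y ^ 2)⁻¹)) (Set.Ioi 0) :=
    ((hi.const_mul _).add hi2).const_mul _
  have hle : ∀ y ∈ Set.Ioi (0 : ℝ), exp (-a * |Rr N y - p|) * Rr N y ≤
      4 * C * p ^ (N - 1) * (((N : ℝ) - 1) / b * √2 * D y + (1 + y ^ 2)⁻¹) := by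
    intro y hy
    have hy0 : (0 : ℝ) < y := hy
    have hr := Rr_pos N y
    have hr1 := Rr_le_deriv hN hy0
    have hr2 := pow_le_pow_mul_one_add_abs hr.le hp (N - 1)
    have hr3 := hCle |Rr N y - p| (abs_nonneg _)
    have hw := le_w1 (b * (Rr N y - p))
    rw [abs_mul, abs_of_pos hb0, show -√2 * (b * |Rr N y - p|) = -(a / 2) * |Rr N y - p| by
      rw [hb]; field_simp] at hw
    simp only [hD]
    set r := Rr N y
    set x := |r - p|
    set R' := y * r / (((N : ℝ) - 1) * (1 + y ^ 2))
    have hR' : 0 < R' := by positivity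
    have he1 : exp (-(a / 2) * x) ≤ 1 := exp_le_one_iff.mpr (by
      have : 0 ≤ a / 2 * x := by positivity
      linarith)
    have hw' : exp (-(a / 2) * x) ≤ √2 * w1 (b * (r - p)) := by
      have h22 : √2 * √2 = 2 := Real.mul_self_sqrt (by norm_num)
      have := mul_le_mul_of_nonneg_left hw h2.le
      linear_combination this - exp (-(a / 2) * x) / 2 * h22
    have he2 : exp (-a * x) * exp (a / 2 * x) = exp (-(a / 2) * x) := by
      rw [← exp_add]; congr 1; ring
    have hpp : 0 < p := by linarith
    calc exp (-a * x) * r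
        ≤ exp (-a * x) * (4 * (p ^ (N - 1) * (C * exp (a / 2 * x))) *
          (((N : ℝ) - 1) * R' + (1 + y ^ 2)⁻¹)) := by
          gcongr
          refine hr1.trans ?_
          gcongr
          exact hr2.trans (by gcongr)
      _ = 4 * C * p ^ (N - 1) * (exp (-a * x) * exp (a / 2 * x) * (((N : ℝ) - 1) * R')
          + exp (-a * x) * exp (a / 2 * x) * (1 + y ^ 2)⁻¹) := by ring
      _ = 4 * C * p ^ (N - 1) * (exp (-(a / 2) * x) * (((N : ℝ) - 1) * R')
          + exp (-(a / 2) * x) * (1 + y ^ 2)⁻¹) := by rw [he2]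
      _ ≤ 4 * C * p ^ (N - 1) * (√2 * w1 (b * (r - p)) * (((N : ℝ) - 1) * R')
          + 1 * (1 + y ^ 2)⁻¹) := by gcongr
      _ = _ := by field_simp
  have hcont : Continuous fun y => exp (-a * |Rr N y - p|) * Rr N y := by
    have := continuous_Rr N
    fun_prop
  have h_int : IntegrableOn (fun y => exp (-a * |Rr N y - p|) * Rr N y) (Set.Ioi 0) := by
    refine hG.mono' hcont.aestronglyMeasurable ?_
    filter_upwards [ae_restrict_mem measurableSet_Ioi] with y hy
    have := Rr_pos N y
    rw [Real.norm_of_nonneg (by positivity)]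
    exact hle y hy
  refine ⟨h_int, (setIntegral_mono_on h_int hG measurableSet_Ioi hle).trans ?_⟩
  rw [integral_const_mul, integral_add (hi.const_mul _) hi2, integral_const_mul, hI]
  have hpi : ∫ y in Set.Ioi (0 : ℝ), (1 + y ^ 2)⁻¹ ≤ π := by
    rw [← integral_univ_inv_one_add_sq]
    exact setIntegral_le_integral integrable_inv_one_add_sq
      (Filter.Eventually.of_forall fun y => by simp only [Pi.zero_apply]; positivity)
  have hw1 : 1 - w (b * (1 - p)) ≤ 2 := by linarith [(abs_le.mp (abs_w_le_one (b * (1 - p)))).1]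
  have hpp : 0 < p := by linarith
  calc 4 * C * p ^ (N - 1) * (((N : ℝ) - 1) / b * √2 * (1 - w (b * (1 - p)))
        + ∫ y in Set.Ioi (0 : ℝ), (1 + y ^ 2)⁻¹)
      ≤ 4 * C * p ^ (N - 1) * (((N : ℝ) - 1) / b * √2 * 2 + π) := by gcongr
    _ = _ := by ring

theorem exists_le_integral_w1_sq {N : ℕ} (hN : 2 ≤ N) :
    ∃ c > 0, ∀ p : ℝ, 1 ≤ p → c * p ^ (N - 1) ≤
      ∫ y in Set.Ioi (0 : ℝ), w1 (Rr N y - p) * w1 (Rr N y - p) * Rr N y := by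
  have h2 : (0 : ℝ) < √2 := by positivity
  obtain ⟨C, hC, hCle⟩ := exists_one_add_pow_le (N - 1) h2
  obtain ⟨C', hC', h_int⟩ := exists_integral_exp_Rr_le hN h2
  have hM := sub_one_pos_of_two_le hN
  refine ⟨((N : ℝ) - 1) / (12 * √2 * C), by positivity, fun p hp => ?_⟩
  obtain ⟨hi, hI⟩ := integral_w1_comp_Rr hN (b := 3) (by norm_num) p
  set D : ℝ → ℝ := fun y => w1 (3 * (Rr N y - p)) *
      (3 * (y * Rr N y / (((N : ℝ) - 1) * (1 + y ^ 2)))) with hD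
  have hpp : 0 < p := by linarith
  have hw0 : w (3 * (1 - p)) ≤ 0 := by
    rw [w_eq]
    have h := exp_le_one_iff.mpr (show √2 * (3 * (1 - p)) ≤ 0 by nlinarith)
    have h' := exp_pos (√2 * (3 * (1 - p)))
    rw [sub_nonpos, le_div_iff₀ (by positivity)]
    linarith
  have hle : ∀ y ∈ Set.Ioi (0 : ℝ), ((N : ℝ) - 1) / (12 * √2 * C) * p ^ (N - 1) * D y ≤
      w1 (Rr N y - p) * w1 (Rr N y - p) * Rr N y := by
    intro y hy
    have hy0 : (0 : ℝ) < y := hy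
    have hr := Rr_pos N y
    have hr1 := deriv_le_Rr hN hy0
    have hr2 := pow_le_pow_mul_one_add_abs hpp.le (one_le_Rr hN y) (N - 1)
    have hr3 := hCle |Rr N y - p| (abs_nonneg _)
    have hw := le_w1 (Rr N y - p)
    have hw3 := w1_le (3 * (Rr N y - p))
    rw [abs_mul, abs_of_pos (by norm_num : (0 : ℝ) < 3)] at hw3
    rw [abs_sub_comm p] at hr2
    simp only [hD]
    set r := Rr N y
    set x := |r - p|
    set R' := y * r / (((N : ℝ) - 1) * (1 + y ^ 2))
    have hR' : 0 < R' := by positivity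
    have h22 : √2 * √2 = 2 := Real.mul_self_sqrt (by norm_num)
    have he : exp (-√2 * (3 * x)) * exp (√2 * x) = exp (-√2 * x) * exp (-√2 * x) := by
      rw [← exp_add, ← exp_add]; congr 1; ring
    calc ((N : ℝ) - 1) / (12 * √2 * C) * p ^ (N - 1) * (w1 (3 * (r - p)) * (3 * R'))
        ≤ ((N : ℝ) - 1) / (12 * √2 * C) * (r ^ (N - 1) * (C * exp (√2 * x))) *
          ((2 * √2 * exp (-√2 * (3 * x))) * (3 * R')) := by
          have := (w1_pos (3 * (r - p))).le
          gcongr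
          exact hr2.trans (by gcongr)
      _ = 1 / 2 * (exp (-√2 * (3 * x)) * exp (√2 * x)) *
          (r ^ (N - 1) * (((N : ℝ) - 1) * R')) := by field_simp; ring
      _ = (√2 / 2 * exp (-√2 * x)) * (√2 / 2 * exp (-√2 * x)) *
          (r ^ (N - 1) * (((N : ℝ) - 1) * R')) := by
          rw [he]
          linear_combination (-(1 / 4) * exp (-√2 * x) * exp (-√2 * x) *
            (r ^ (N - 1) * (((N : ℝ) - 1) * R'))) * h22
      _ ≤ _ := by
          have := (w1_pos (r - p)).le
          gcongr
  have hcont : Continuous fun y => w1 (Rr N y - p) * w1 (Rr N y - p) * Rr N y := by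
    have := continuous_Rr N
    have := continuous_w1
    fun_prop
  have h_int' : IntegrableOn (fun y => w1 (Rr N y - p) * w1 (Rr N y - p) * Rr N y)
      (Set.Ioi 0) := by
    refine ((h_int p hp).1.const_mul (2 * √2 * (2 * √2))).mono' hcont.aestronglyMeasurable
      (Filter.Eventually.of_forall fun y => ?_)
    have h1 := Rr_pos N y
    have h2 := w1_pos (Rr N y - p)
    have h3 := w1_le (Rr N y - p)
    have h4 : w1 (Rr N y - p) ≤ 2 * √2 := h3.trans
      (mul_le_of_le_one_right (by positivity) (by simp))
    rw [Real.norm_of_nonneg (by positivity)]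
    calc w1 (Rr N y - p) * w1 (Rr N y - p) * Rr N y
        ≤ (2 * √2) * (2 * √2 * exp (-√2 * |Rr N y - p|)) * Rr N y := by gcongr
      _ = _ := by ring
  refine le_trans ?_ (setIntegral_mono_on (hi.const_mul _) h_int' measurableSet_Ioi hle)
  rw [integral_const_mul, hI]
  exact le_mul_of_one_le_right (by positivity) (by linarith)

/-! ### Asymptotics of `η` -/

namespace Setting

variable {N k : ℕ} {η : ℝ → ℝ} {γ : ℕ → ℝ}

theorem hasDerivAt_eta_neg (S : Setting N k η γ) {τ : ℝ} (hτ : 1 ≤ τ) :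
    HasDerivAt (fun τ => η (-τ)) (-(η (-τ) / (2 * τ)) + β * exp (-√2 * η (-τ))) τ := by
  have h1 := (S.hηdiff (-τ) (by linarith)).hasDerivAt
  have h2 := S.hηode (-τ) (by linarith)
  refine HasDerivAt.congr_deriv (h1.comp τ (hasDerivAt_neg τ)) ?_
  have h3 : η (-τ) / (2 * -τ) = -(η (-τ) / (2 * τ)) := by rw [mul_neg, div_neg]
  rw [h3] at h2
  linear_combination -h2

theorem eta_neg_nonneg (S : Setting N k η γ) {τ : ℝ} (hτ : 1 ≤ τ) : 0 ≤ η (-τ) := by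
  have hd : ∀ x : ℝ, 1 ≤ x → HasDerivAt (fun τ => √τ * η (-τ))
      (√x * (β * exp (-√2 * η (-x)))) x := by
    intro x hx
    have hx0 : 0 < x := by linarith
    refine HasDerivAt.congr_deriv
      ((Real.hasDerivAt_sqrt hx0.ne').mul (S.hasDerivAt_eta_neg hx)) ?_
    have h1 : √x * √x = x := Real.mul_self_sqrt hx0.le
    have h2 : 0 < √x := Real.sqrt_pos.mpr hx0
    have h3 : 1 / (2 * √x) * η (-x) = √x * (η (-x) / (2 * x)) := by
      field_simp
      linear_combination (-η (-x)) * h1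
    linear_combination h3
  have hmono : MonotoneOn (fun τ => √τ * η (-τ)) (Set.Ici 1) := by
    refine monotoneOn_of_hasDerivWithinAt_nonneg (convex_Ici 1)
      (fun x hx => (hd x hx).continuousAt.continuousWithinAt)
      (fun x hx => (hd x (interior_subset hx)).hasDerivWithinAt) fun x _ => ?_
    have := beta_pos
    positivity
  have h := hmono Set.self_mem_Ici hτ hτ
  simp only [Real.sqrt_one, S.hηinit, mul_zero] at h
  exact nonneg_of_mul_nonneg_right h (Real.sqrt_pos.mpr (by linarith))

theorem hasDerivAt_exp_eta_neg (S : Setting N k η γ) {τ : ℝ} (hτ : 1 ≤ τ) :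
    HasDerivAt (fun τ => exp (√2 * η (-τ)))
      (√2 * β - exp (√2 * η (-τ)) * (√2 * η (-τ)) / (2 * τ)) τ := by
  refine HasDerivAt.congr_deriv ((S.hasDerivAt_eta_neg hτ).const_mul √2).exp ?_
  have h : exp (√2 * η (-τ)) * exp (-√2 * η (-τ)) = 1 := by rw [← exp_add]; simp
  linear_combination (√2 * β) * h

theorem exp_eta_neg_le (S : Setting N k η γ) {τ : ℝ} (hτ : 1 ≤ τ) :
    exp (√2 * η (-τ)) ≤ (1 + √2 * β) * τ := by
  have hβ := beta_pos
  have hd : ∀ x : ℝ, 1 ≤ x → HasDerivAt (fun τ => exp (√2 * η (-τ)) - τ * (√2 * β))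
      (√2 * β - exp (√2 * η (-x)) * (√2 * η (-x)) / (2 * x) - 1 * (√2 * β)) x := fun x hx =>
    (S.hasDerivAt_exp_eta_neg hx).sub ((hasDerivAt_id x).mul_const _)
  have hanti : AntitoneOn (fun τ => exp (√2 * η (-τ)) - τ * (√2 * β)) (Set.Ici 1) := by
    refine antitoneOn_of_hasDerivWithinAt_nonpos (convex_Ici 1)
      (fun x hx => (hd x hx).continuousAt.continuousWithinAt)
      (fun x hx => (hd x (interior_subset hx)).hasDerivWithinAt) fun x hx => ?_
    have hx1 : 1 ≤ x := interior_subset hx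
    have h1 := S.eta_neg_nonneg hx1
    have : 0 ≤ exp (√2 * η (-x)) * (√2 * η (-x)) / (2 * x) := by positivity
    linarith
  have h := hanti Set.self_mem_Ici hτ hτ
  simp only [S.hηinit, mul_zero, exp_zero] at h
  have : 0 < √2 * β := by positivity
  linarith

theorem exists_eta_bounds (S : Setting N k η γ) : ∃ C > 0, ∀ t ≤ (-2 : ℝ),
    0 ≤ η t ∧ exp (√2 * η t) ≤ C * |t| ∧ exp (-√2 * η t) ≤ C * (log |t| / |t|) := by
  have hβ := beta_pos
  have h2 : (0 : ℝ) < √2 := by positivity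
  set K : ℝ := 1 + log (1 + √2 * β) with hK
  have hK1 : 1 ≤ K := by
    have : 0 ≤ log (1 + √2 * β) := log_nonneg (by linarith [mul_pos h2 hβ])
    linarith
  set c : ℝ := min 1 (√2 * β / 2) with hc
  have hc0 : 0 < c := by positivity
  have hc1 : c ≤ 1 := min_le_left _ _
  have hc2 : c ≤ √2 * β / 2 := min_le_right _ _
  have hEle : ∀ x : ℝ, 1 ≤ x → √2 * η (-x) ≤ K + log x := by
    intro x hx
    have h := S.exp_eta_neg_le hx
    rw [← le_log_iff_exp_le (by positivity), log_mul (by positivity) (by positivity)] at h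
    linarith
  have hlpos : ∀ x : ℝ, 1 ≤ x → 1 ≤ K + log x := fun x hx => by
    have := log_nonneg hx
    linarith
  have hd : ∀ x : ℝ, 1 ≤ x →
      HasDerivAt (fun τ => exp ((K + log τ) ^ 2 / 4) *
        (exp (√2 * η (-τ)) - c * τ / (K + log τ)))
      (exp ((K + log x) ^ 2 / 4) * (√2 * β - exp (√2 * η (-x)) * (√2 * η (-x)) / (2 * x)
        - (c / (K + log x) - c / (K + log x) ^ 2)
        + (exp (√2 * η (-x)) - c * x / (K + log x)) * ((K + log x) / (2 * x)))) x := by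
    intro x hx
    have hx0 : 0 < x := by linarith
    have hl0 : 0 < K + log x := by linarith [hlpos x hx]
    have hl : HasDerivAt (fun τ => K + log τ) x⁻¹ x := (hasDerivAt_log hx0.ne').const_add K
    have hμ := ((hl.pow 2).div_const 4).exp
    have hv := ((hasDerivAt_id x).const_mul c).div hl hl0.ne'
    refine HasDerivAt.congr_deriv (hμ.mul ((S.hasDerivAt_exp_eta_neg hx).sub hv)) ?_
    simp only [Pi.pow_apply, id]
    field_simp
    push_cast
    ring
  have hmono : MonotoneOn (fun τ => exp ((K + log τ) ^ 2 / 4) *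
      (exp (√2 * η (-τ)) - c * τ / (K + log τ))) (Set.Ici 1) := by
    refine monotoneOn_of_hasDerivWithinAt_nonneg (convex_Ici 1)
      (fun x hx => (hd x hx).continuousAt.continuousWithinAt)
      (fun x hx => (hd x (interior_subset hx)).hasDerivWithinAt) fun x hx => ?_
    have hx1 : 1 ≤ x := interior_subset hx
    have hx0 : 0 < x := by linarith
    have hl := hlpos x hx1
    refine mul_nonneg (exp_pos _).le ?_
    have e1 : exp (√2 * η (-x)) * (√2 * η (-x)) / (2 * x) ≤
        exp (√2 * η (-x)) * ((K + log x) / (2 * x)) := by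
      rw [mul_div_assoc]
      gcongr
      exact hEle x hx1
    have e2 : c / (K + log x) ≤ c := div_le_self hc0.le hl
    have e3 : 0 ≤ c / (K + log x) ^ 2 := by positivity
    have e4 : c * x / (K + log x) * ((K + log x) / (2 * x)) = c / 2 := by
      have : K + log x ≠ 0 := by linarith
      field_simp
    rw [sub_mul, e4]
    linarith
  have hlow : ∀ x : ℝ, 1 ≤ x → c * x / (K + log x) ≤ exp (√2 * η (-x)) := by
    intro x hx
    have h := hmono Set.self_mem_Ici hx hx
    simp only [S.hηinit, mul_zero, exp_zero, log_one, add_zero, mul_one] at h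
    have h1 : 0 ≤ exp (K ^ 2 / 4) * (1 - c / K) := by
      refine mul_nonneg (exp_pos _).le ?_
      rw [sub_nonneg, div_le_one (by linarith)]
      linarith
    linarith [nonneg_of_mul_nonneg_right (h1.trans h) (exp_pos _)]
  have hlog2 : 0 < log 2 := log_pos (by norm_num)
  refine ⟨max (1 + √2 * β) ((K / log 2 + 1) / c), by positivity, fun t ht => ?_⟩
  have habs : |t| = -t := abs_of_neg (by linarith)
  have ht1 : 1 ≤ -t := by linarith
  have htt : η t = η (- -t) := by rw [neg_neg]
  rw [habs, htt]
  refine ⟨S.eta_neg_nonneg ht1, (S.exp_eta_neg_le ht1).trans ?_, ?_⟩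
  · gcongr
    exact le_max_left _ _
  · have hl := hlpos (-t) ht1
    have hlog : log 2 ≤ log (-t) := log_le_log (by norm_num) (by linarith)
    have h := hlow (-t) ht1
    have hlog0 : 0 < log (-t) := by linarith
    calc exp (-√2 * η (- -t)) = (exp (√2 * η (- -t)))⁻¹ := by rw [← exp_neg, neg_mul]
      _ ≤ (c * -t / (K + log (-t)))⁻¹ := by gcongr
      _ = (K + log (-t)) / (c * -t) := inv_div _ _
      _ ≤ (K / log 2 * log (-t) + log (-t)) / (c * -t) := by
          gcongr
          rw [div_mul_eq_mul_div, le_div_iff₀ hlog2]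
          gcongr
      _ = (K / log 2 + 1) / c * (log (-t) / -t) := by field_simp
      _ ≤ _ := by
          gcongr
          exact le_max_right _ _

theorem tendsto_eta (S : Setting N k η γ) : Filter.Tendsto η Filter.atBot Filter.atTop := by
  obtain ⟨C, hC, hb⟩ := S.exists_eta_bounds
  have h2 : (0 : ℝ) < √2 := by positivity
  have h0 : Filter.Tendsto (fun t : ℝ => C * (log |t| / |t|)) Filter.atBot (nhds 0) := by
    have h1 : Filter.Tendsto (fun x : ℝ => log x / x) Filter.atTop (nhds 0) :=
      Real.isLittleO_log_id_atTop.tendsto_div_nhds_zero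
    simpa using (h1.comp Filter.tendsto_abs_atBot_atTop).const_mul C
  have h1 : Filter.Tendsto (fun t => exp (-√2 * η t)) Filter.atBot (nhds 0) := by
    refine squeeze_zero' (Filter.Eventually.of_forall fun t => (exp_pos _).le) ?_ h0
    filter_upwards [Filter.eventually_le_atBot (-2)] with t ht using (hb t ht).2.2
  rw [Real.tendsto_exp_comp_nhds_zero] at h1
  have h3 := Filter.tendsto_neg_atBot_atTop.comp h1
  have h4 := h3.const_mul_atTop (inv_pos.mpr h2)
  refine h4.congr fun t => ?_
  simp only [Function.comp_apply]
  field_simp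

theorem tendsto_eta_div_sqrt (S : Setting N k η γ) :
    Filter.Tendsto (fun t => η t / √|t|) Filter.atBot (nhds 0) := by
  obtain ⟨C, hC, hb⟩ := S.exists_eta_bounds
  have h2 : (1 : ℝ) ≤ √2 := Real.one_le_sqrt.mpr (by norm_num)
  have hlog : Filter.Tendsto (fun x : ℝ => log C / √x + log x / √x) Filter.atTop (nhds 0) := by
    have e1 : Filter.Tendsto (fun x : ℝ => log x / √x) Filter.atTop (nhds 0) := by
      have := (isLittleO_log_rpow_atTop (r := 1 / 2) (by norm_num)).tendsto_div_nhds_zero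
      refine this.congr fun x => ?_
      rw [Real.sqrt_eq_rpow]
    simpa using (Real.tendsto_sqrt_atTop.const_div_atTop (log C)).add e1
  refine squeeze_zero' ?_ ?_ (hlog.comp Filter.tendsto_abs_atBot_atTop)
  · filter_upwards [Filter.eventually_le_atBot (-2)] with t ht
    exact div_nonneg (hb t ht).1 (Real.sqrt_nonneg _)
  · filter_upwards [Filter.eventually_le_atBot (-2)] with t ht
    obtain ⟨h0, h1, -⟩ := hb t ht
    have habs : 0 < |t| := abs_pos.mpr (by linarith)
    rw [← le_log_iff_exp_le (by positivity), log_mul hC.ne' habs.ne'] at h1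
    simp only [Function.comp_apply]
    rw [← add_div]
    gcongr
    nlinarith

end Setting

/-! ### Almost equally spaced interfaces -/

/-- The points `q 1, …, q k` are equally spaced with step `e`, up to an error `B`. -/
def Spaced (k : ℕ) (q : ℕ → ℝ) (e B : ℝ) : Prop :=
  ∀ i ∈ Finset.Icc 1 k, ∀ j ∈ Finset.Icc 1 k, |q i - q j - ((i : ℝ) - j) * e| ≤ B

namespace Spaced

variable {k : ℕ} {q : ℕ → ℝ} {e B : ℝ}

theorem sub_ge_of_lt (hq : Spaced k q e B) (he : 0 ≤ e) {i j : ℕ} (hi : i ∈ Finset.Icc 1 k)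
    (hj : j ∈ Finset.Icc 1 k) (hij : j < i) : e - B ≤ q i - q j := by
  have h := (abs_le.mp (hq i hi j hj)).1
  have h1 : (j : ℝ) + 1 ≤ i := by exact_mod_cast hij
  nlinarith

theorem sub_ge_of_le (hq : Spaced k q e B) (he : 0 ≤ e) {i j : ℕ} (hi : i ∈ Finset.Icc 1 k)
    (hj : j ∈ Finset.Icc 1 k) (hij : j ≤ i) : -B ≤ q i - q j := by
  have h := (abs_le.mp (hq i hi j hj)).1
  have h1 : (j : ℝ) ≤ i := by exact_mod_cast hij
  nlinarith

theorem sub_le_of_le_succ (hq : Spaced k q e B) (he : 0 ≤ e) {i j : ℕ}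
    (hi : i ∈ Finset.Icc 1 k) (hj : j ∈ Finset.Icc 1 k) (hij : i ≤ j + 1) :
    q i - q j ≤ e + B := by
  have h := (abs_le.mp (hq i hi j hj)).2
  have h1 : (i : ℝ) ≤ j + 1 := by exact_mod_cast hij
  nlinarith

theorem abs_sub_ge (hq : Spaced k q e B) (he : 0 ≤ e) {i j : ℕ} (hi : i ∈ Finset.Icc 1 k)
    (hj : j ∈ Finset.Icc 1 k) (hij : i ≠ j) : e - B ≤ |q i - q j| := by
  rcases lt_or_gt_of_ne hij with h | h
  · rw [abs_sub_comm]
    exact (hq.sub_ge_of_lt he hj hi h).trans (le_abs_self _)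
  · exact (hq.sub_ge_of_lt he hi hj h).trans (le_abs_self _)

theorem neg_sub_le_right (hq : Spaced k q e B) (he : 0 ≤ e) {l j : ℕ}
    (hl : l ∈ Finset.Icc 1 k) (hj : j ∈ Finset.Icc 1 k) {r : ℝ} (hr : e / 2 - B / 2 ≤ r - q l)
    (hB : 0 ≤ B) : -(r - q l) ≤ -e + min |r - q j| (e / 2) + 2 * B := by
  have h1 : -(r - q l) + e - 2 * B ≤ |r - q j| := by
    rcases le_or_gt j l with h | h
    · have := hq.sub_ge_of_le he hl hj h
      linarith [le_abs_self (r - q j)]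
    · have := hq.sub_ge_of_lt he hj hl h
      linarith [neg_abs_le (r - q j)]
  have h2 := le_min h1 (show -(r - q l) + e - 2 * B ≤ e / 2 by linarith)
  linarith

theorem neg_sub_le_left (hq : Spaced k q e B) (he : 0 ≤ e) {l j : ℕ}
    (hl : l ∈ Finset.Icc 1 k) (hj : j ∈ Finset.Icc 1 k) {r : ℝ} (hr : e / 2 - B / 2 ≤ q l - r)
    (hB : 0 ≤ B) : r - q l ≤ -e + min |r - q j| (e / 2) + 2 * B := by
  have h1 : r - q l + e - 2 * B ≤ |r - q j| := by
    rcases le_or_gt l j with h | h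
    · have := hq.sub_ge_of_le he hj hl h
      linarith [neg_abs_le (r - q j)]
    · have := hq.sub_ge_of_lt he hl hj h
      linarith [le_abs_self (r - q j)]
  have h2 := le_min h1 (show r - q l + e - 2 * B ≤ e / 2 by linarith)
  linarith

end Spaced

theorem exists_midpoint_interval {k : ℕ} (hk : 2 ≤ k) (q : ℕ → ℝ) (r : ℝ) :
    r ≤ (q 1 + q 2) / 2 ∨
    (∃ j, 2 ≤ j ∧ j < k ∧ (q j + q (j - 1)) / 2 < r ∧ r ≤ (q j + q (j + 1)) / 2) ∨
    (q k + q (k - 1)) / 2 < r := by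
  by_contra! H
  obtain ⟨h1, h2, h3⟩ := H
  have h : ∀ n, 2 ≤ n → n ≤ k → (q n + q (n - 1)) / 2 < r := by
    intro n hn
    induction n, hn using Nat.le_induction with
    | base => intro _; simpa [add_comm] using h1
    | succ n hn ih =>
      intro hnk
      have := h2 n hn (by omega) (ih (by omega))
      simpa [add_comm] using this
  exact absurd (h k hk le_rfl) (not_lt.mpr h3)

namespace IsPhi

variable {N k : ℕ} {η : ℝ → ℝ} {γ : ℕ → ℝ} {σ : ℝ} {Φ : ℝ → ℝ → ℝ}

theorem pos (hΦ : IsPhi N k η γ σ Φ) (hk : 2 ≤ k) (t : ℝ) {r : ℝ} (hr : 1 < r) : 0 < Φ t r := by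
  rcases exists_midpoint_interval hk (fun j => rho0 N k η γ j t) r with h | ⟨j, h1, h2, h3, h4⟩ | h
  · rw [hΦ.1 t r hr h]
    positivity
  · rw [hΦ.2.1 t r j h1 h2 h3 h4]
    positivity
  · rw [hΦ.2.2 t r h]
    positivity

theorem le (hΦ : IsPhi N k η γ σ Φ) (hk : 2 ≤ k) (hσ : 0 < σ) {t e B : ℝ} (he : 0 ≤ e)
    (hB : 0 ≤ B) (hq : Spaced k (fun j => rho0 N k η γ j t) e B) {r : ℝ} (hr : 1 < r)
    {j : ℕ} (hj : j ∈ Finset.Icc 1 k) :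
    Φ t r ≤ 2 * exp (σ * (-e + min |r - rho0 N k η γ j t| (e / 2) + 2 * B)) := by
  set X := exp (σ * (-e + min |r - rho0 N k η γ j t| (e / 2) + 2 * B)) with hX
  have hX0 : 0 < X := exp_pos _
  have right : ∀ l ∈ Finset.Icc 1 k, ∀ l' ∈ Finset.Icc 1 k, l' < l →
      (rho0 N k η γ l t + rho0 N k η γ l' t) / 2 < r →
      exp (σ * (-r + rho0 N k η γ l' t)) ≤ X := by
    intro l hl l' hl' hll h
    have h1 : e - B ≤ rho0 N k η γ l t - rho0 N k η γ l' t := hq.sub_ge_of_lt he hl hl' hll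
    have h2 : -(r - rho0 N k η γ l' t) ≤ _ := hq.neg_sub_le_right he hl' hj (by linarith) hB
    rw [hX]
    exact exp_le_exp.mpr (mul_le_mul_of_nonneg_left (by linarith) hσ.le)
  have left : ∀ l ∈ Finset.Icc 1 k, ∀ l' ∈ Finset.Icc 1 k, l < l' →
      r ≤ (rho0 N k η γ l t + rho0 N k η γ l' t) / 2 →
      exp (σ * (r - rho0 N k η γ l' t)) ≤ X := by
    intro l hl l' hl' hll h
    have h1 : e - B ≤ rho0 N k η γ l' t - rho0 N k η γ l t := hq.sub_ge_of_lt he hl' hl hll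
    have h2 : r - rho0 N k η γ l' t ≤ _ := hq.neg_sub_le_left he hl' hj (by linarith) hB
    rw [hX]
    exact exp_le_exp.mpr (mul_le_mul_of_nonneg_left (by linarith) hσ.le)
  rcases exists_midpoint_interval hk (fun j => rho0 N k η γ j t) r with h | ⟨i, h1, h2, h3, h4⟩ | h
  · rw [hΦ.1 t r hr h]
    have := left 1 (by simp; omega) 2 (by simp; omega) (by omega) h
    linarith
  · rw [hΦ.2.1 t r i h1 h2 h3 h4]
    have := left i (by simp; omega) (i + 1) (by simp; omega) (by omega) h4
    have := right i (by simp; omega) (i - 1) (by simp; omega) (by omega) h3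
    linarith
  · rw [hΦ.2.2 t r h]
    have := right k (by simp; omega) (k - 1) (by simp; omega) (by omega) h
    linarith

theorem ge (hΦ : IsPhi N k η γ σ Φ) (hk : 2 ≤ k) (hσ : 0 < σ) {t e B : ℝ} (he : 0 ≤ e)
    (hq : Spaced k (fun j => rho0 N k η γ j t) e B) {r : ℝ} (hr : 1 < r)
    {j : ℕ} (hj : j ∈ Finset.Icc 1 k) :
    exp (σ * (-e - |r - rho0 N k η γ j t| - B)) ≤ Φ t r := by
  obtain ⟨hj1, hjk⟩ := Finset.mem_Icc.mp hj
  have habs := abs_nonneg (r - rho0 N k η γ j t)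
  rcases exists_midpoint_interval hk (fun j => rho0 N k η γ j t) r with h | ⟨i, h1, h2, h3, h4⟩ | h
  · rw [hΦ.1 t r hr h]
    have h5 : rho0 N k η γ 2 t - rho0 N k η γ j t ≤ e + B :=
      hq.sub_le_of_le_succ he (by simp; omega) hj (by omega)
    exact exp_le_exp.mpr (mul_le_mul_of_nonneg_left (by linarith [neg_abs_le (r - rho0 N k η γ j t)]) hσ.le)
  · rw [hΦ.2.1 t r i h1 h2 h3 h4]
    rcases le_total (rho0 N k η γ i t) r with h5 | h5
    · have h6 : rho0 N k η γ (i + 1) t - rho0 N k η γ i t ≤ e + B :=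
        hq.sub_le_of_le_succ he (by simp; omega) (by simp; omega) (by omega)
      refine le_add_of_nonneg_of_le (exp_pos _).le ?_
      exact exp_le_exp.mpr (mul_le_mul_of_nonneg_left (by linarith) hσ.le)
    · have h6 : rho0 N k η γ i t - rho0 N k η γ (i - 1) t ≤ e + B :=
        hq.sub_le_of_le_succ he (by simp; omega) (by simp; omega) (by omega)
      refine le_add_of_le_of_nonneg ?_ (exp_pos _).le
      exact exp_le_exp.mpr (mul_le_mul_of_nonneg_left (by linarith) hσ.le)
  · rw [hΦ.2.2 t r h]
    have h5 : rho0 N k η γ j t - rho0 N k η γ (k - 1) t ≤ e + B :=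
      hq.sub_le_of_le_succ he hj (by simp; omega) (by omega)
    exact exp_le_exp.mpr (mul_le_mul_of_nonneg_left (by linarith [le_abs_self (r - rho0 N k η γ j t)]) hσ.le)

end IsPhi

/-! ### The linearized potential near an interface -/

theorem sum_alternating_step (j n : ℕ) (hj : 1 ≤ j) :
    ∑ i ∈ Finset.Icc 1 n, (-1 : ℝ) ^ (i + 1) * (if i < j then 1 else if i = j then 0 else -1) =
      if n < j then (1 - (-1) ^ n) / 2 else (1 + (-1) ^ n) / 2 := by
  induction n with
  | zero => simp [show 0 < j by omega]
  | succ n ih =>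
    rw [Finset.sum_Icc_succ_top (by omega), ih]
    rcases lt_trichotomy (n + 1) j with h | h | h
    · simp only [h, show n < j by omega, if_true]
      ring
    · subst h
      simp only [lt_irrefl, show n < n + 1 by omega, if_true, if_false]
      ring
    · simp only [show ¬ n + 1 < j by omega, show ¬ n < j by omega, show ¬ n + 1 = j by omega,
        if_false]
      ring

theorem sum_w_sub_one_sub {k j : ℕ} (hk : Even k) (hj : j ∈ Finset.Icc 1 k) (p : ℕ → ℝ) (r : ℝ) :
    (∑ i ∈ Finset.Icc 1 k, (-1 : ℝ) ^ (i + 1) * w (r - p i)) - 1 - (-1) ^ (j + 1) * w (r - p j) =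
      ∑ i ∈ (Finset.Icc 1 k).erase j,
        (-1 : ℝ) ^ (i + 1) * (w (r - p i) - if i < j then 1 else -1) := by
  obtain ⟨hj1, hjk⟩ := Finset.mem_Icc.mp hj
  have h1 := sum_alternating_step j k hj1
  rw [if_neg (by omega), hk.neg_one_pow] at h1
  rw [← Finset.add_sum_erase _ _ hj] at h1 ⊢
  have h2 : ∑ i ∈ (Finset.Icc 1 k).erase j,
      (-1 : ℝ) ^ (i + 1) * (if i < j then 1 else if i = j then 0 else -1) =
      ∑ i ∈ (Finset.Icc 1 k).erase j, (-1 : ℝ) ^ (i + 1) * (if i < j then 1 else -1) := by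
    refine Finset.sum_congr rfl fun i hi => ?_
    rw [if_neg (Finset.ne_of_mem_erase hi)]
  rw [h2] at h1
  simp only [lt_irrefl, if_true, if_false, mul_zero, zero_add] at h1
  simp only [mul_sub, Finset.sum_sub_distrib]
  linarith

theorem abs_sum_w_sub_one_le (k : ℕ) (p : ℕ → ℝ) (r : ℝ) :
    |(∑ i ∈ Finset.Icc 1 k, (-1 : ℝ) ^ (i + 1) * w (r - p i)) - 1| ≤ k + 1 := by
  have h : |∑ i ∈ Finset.Icc 1 k, (-1 : ℝ) ^ (i + 1) * w (r - p i)| ≤ k := by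
    refine (Finset.abs_sum_le_sum_abs _ _).trans ?_
    refine (Finset.sum_le_card_nsmul _ _ 1 fun i _ => ?_).trans (by simp)
    rw [abs_mul, abs_pow, abs_neg, abs_one, one_pow, one_mul]
    exact abs_w_le_one _
  calc _ ≤ |∑ i ∈ Finset.Icc 1 k, (-1 : ℝ) ^ (i + 1) * w (r - p i)| + |(1 : ℝ)| := abs_sub _ _
    _ ≤ _ := by rw [abs_one]; linarith

theorem abs_f1_sub_le {k j : ℕ} (hk : Even k) (hj : j ∈ Finset.Icc 1 k) {p : ℕ → ℝ} {e B : ℝ}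
    (he : 0 ≤ e) (hB : 0 ≤ B) (hp : Spaced k p e B) (r : ℝ) :
    |f1 ((∑ i ∈ Finset.Icc 1 k, (-1 : ℝ) ^ (i + 1) * w (r - p i)) - 1) - f1 (w (r - p j))| ≤
      6 * ((k : ℝ) + 2) ^ 2 * exp (√2 * B) * min 1 (exp (√2 * (|r - p j| - e))) := by
  set Z := (∑ i ∈ Finset.Icc 1 k, (-1 : ℝ) ^ (i + 1) * w (r - p i)) - 1 with hZ
  have hZle : |Z| ≤ k + 1 := abs_sum_w_sub_one_le k p r
  have hw := abs_w_le_one (r - p j)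
  set s : ℝ := (-1) ^ (j + 1) with hs
  have hs1 : |s| = 1 := by simp [hs]
  have hs2 : s ^ 2 = 1 := by rw [← sq_abs, hs1, one_pow]
  have hsw : |s * w (r - p j)| ≤ 1 := by rw [abs_mul, hs1, one_mul]; exact hw
  have hE : 1 ≤ exp (√2 * B) := one_le_exp (by positivity)
  have hfac : f1 Z - f1 (w (r - p j)) =
      -3 * (Z + s * w (r - p j)) * (Z - s * w (r - p j)) := by
    rw [f1_eq, f1_eq]
    linear_combination (-3 * w (r - p j) ^ 2) * hs2
  have hk0 : (0 : ℝ) ≤ k := Nat.cast_nonneg k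
  have hadd : |Z + s * w (r - p j)| ≤ k + 2 := (abs_add_le _ _).trans (by linarith)
  have hsub1 : |Z - s * w (r - p j)| ≤ k + 2 := (abs_sub _ _).trans (by linarith)
  have hsub2 : |Z - s * w (r - p j)| ≤ k * (2 * exp (√2 * (|r - p j| - e + B))) := by
    rw [hZ, hs, sum_w_sub_one_sub hk hj p r]
    refine (Finset.abs_sum_le_sum_abs _ _).trans ?_
    have hcard : (((Finset.Icc 1 k).erase j).card : ℝ) ≤ k := by
      exact_mod_cast (Finset.card_le_card (Finset.erase_subset _ _)).trans (by simp)
    refine (Finset.sum_le_card_nsmul _ _ (2 * exp (√2 * (|r - p j| - e + B)))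
      fun i hi => ?_).trans ?_
    · obtain ⟨hij, hi⟩ := Finset.mem_erase.mp hi
      rw [abs_mul, abs_pow, abs_neg, abs_one, one_pow, one_mul]
      rcases lt_or_gt_of_ne hij with h | h
      · rw [if_pos h]
        refine (abs_w_sub_one_le _).trans ?_
        rw [neg_mul, ← mul_neg]
        have := hp.sub_ge_of_lt he hj hi h
        gcongr
        linarith [neg_abs_le (r - p j)]
      · rw [if_neg (by omega), sub_neg_eq_add]
        refine (abs_w_add_one_le _).trans ?_
        have := hp.sub_ge_of_lt he hi hj h
        gcongr
        linarith [le_abs_self (r - p j)]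
    · rw [nsmul_eq_mul]
      gcongr
  have hmin : |Z - s * w (r - p j)| ≤
      2 * ((k : ℝ) + 2) * exp (√2 * B) * min 1 (exp (√2 * (|r - p j| - e))) := by
    rw [mul_min_of_nonneg _ _ (by positivity)]
    refine le_min (hsub1.trans ?_) (hsub2.trans ?_)
    · nlinarith
    · rw [mul_add √2, exp_add]
      have := mul_pos (exp_pos (√2 * B)) (exp_pos (√2 * (|r - p j| - e)))
      nlinarith
  rw [hfac, abs_mul, abs_mul, abs_neg, abs_of_pos (by norm_num : (0 : ℝ) < 3)]
  calc 3 * |Z + s * w (r - p j)| * |Z - s * w (r - p j)|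
      ≤ 3 * ((k : ℝ) + 2) *
        (2 * ((k : ℝ) + 2) * exp (√2 * B) * min 1 (exp (√2 * (|r - p j| - e)))) := by gcongr
    _ = _ := by ring

/-! ### Diagonally dominant systems and measurability of divisors -/

theorem exists_solution_of_diag_dominant (s : Finset ℕ) (A : ℕ → ℕ → ℝ) (b : ℕ → ℝ) {m K : ℝ}
    (hm : 0 < m) (hA : ∀ j ∈ s, ∑ i ∈ s.erase j, |A i j| + m ≤ A j j)
    (hb : ∀ j ∈ s, |b j| ≤ K) :
    ∃ d : ℕ → ℝ, (∀ j ∈ s, ∑ i ∈ s, d i * A i j = b j) ∧ ∀ i ∈ s, |d i| ≤ K / m := by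
  set M : Matrix s s ℝ := Matrix.of fun j i => A i j with hM
  have hdet : M.det ≠ 0 := by
    refine det_ne_zero_of_sum_row_lt_diag fun j => ?_
    have h1 : ∑ i ∈ Finset.univ.erase j, ‖M j i‖ = ∑ i ∈ s.erase j, |A i j| := by
      have h2 := Finset.sum_erase_eq_sub (f := fun i : s => |A i j|) (Finset.mem_univ j)
      have h3 := Finset.sum_erase_eq_sub (f := fun i => |A i j|) j.2
      rw [Finset.sum_coe_sort s (fun i => |A i j|)] at h2
      exact h2.trans h3.symm
    have h2 := hA j j.2
    rw [h1, Real.norm_eq_abs]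
    exact (by linarith : _ < A j j).trans_le (le_abs_self _)
  set v : s → ℝ := M⁻¹.mulVec fun j => b j with hv
  have hMv : M.mulVec v = fun j : s => b j := by
    rw [hv, Matrix.mulVec_mulVec, Matrix.mul_nonsing_inv _ (isUnit_iff_ne_zero.mpr hdet),
      Matrix.one_mulVec]
  set d : ℕ → ℝ := fun i => if h : i ∈ s then v ⟨i, h⟩ else 0 with hd
  have hsol : ∀ j ∈ s, ∑ i ∈ s, d i * A i j = b j := by
    intro j hj
    have h1 := congrFun hMv ⟨j, hj⟩
    rw [← Finset.sum_coe_sort s, ← h1]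
    simp only [Matrix.mulVec, dotProduct, hM, Matrix.of_apply]
    refine Finset.sum_congr rfl fun i _ => ?_
    simp only [hd, i.2, dite_true]
    ring
  refine ⟨d, hsol, fun i hi => ?_⟩
  obtain ⟨j, hj, hmax⟩ := s.exists_max_image (fun i => |d i|) ⟨i, hi⟩
  refine (hmax i hi).trans ?_
  rw [le_div_iff₀ hm]
  have h1 := hsol j hj
  rw [← Finset.add_sum_erase _ _ hj] at h1
  have h2 : |∑ i ∈ s.erase j, d i * A i j| ≤ |d j| * ∑ i ∈ s.erase j, |A i j| := by
    refine (Finset.abs_sum_le_sum_abs _ _).trans ?_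
    rw [Finset.mul_sum]
    refine Finset.sum_le_sum fun l hl => ?_
    rw [abs_mul]
    exact mul_le_mul_of_nonneg_right (hmax l (Finset.mem_of_mem_erase hl)) (abs_nonneg _)
  have h3 : |d j * A j j| ≤ |b j| + |∑ i ∈ s.erase j, d i * A i j| := by
    rw [eq_sub_of_add_eq h1]
    exact abs_sub _ _
  have hs0 : 0 ≤ ∑ i ∈ s.erase j, |A i j| := Finset.sum_nonneg fun _ _ => abs_nonneg _
  have h4 := hA j hj
  rw [abs_mul, abs_of_nonneg (by linarith : 0 ≤ A j j)] at h3
  have h5 := mul_le_mul_of_nonneg_left h4 (abs_nonneg (d j))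
  linarith [hb j hj]

theorem aestronglyMeasurable_of_integrableOn_mul {F ψ : ℝ → ℝ} {U : Set ℝ}
    (hF : ∀ x, AnalyticAt ℝ F x) {x₀ : ℝ} (hx₀ : F x₀ ≠ 0)
    (h : IntegrableOn (fun y => ψ y * F y) U) : AEStronglyMeasurable ψ (volume.restrict U) := by
  have hF' : AnalyticOnNhd ℝ F Set.univ := fun x _ => hF x
  have hcod := hF'.preimage_zero_mem_codiscrete hx₀
  have hae : ∀ᵐ y ∂(volume.restrict U), F y ≠ 0 :=
    ae_restrict_of_ae (by
      have := ae_restrict_le_codiscreteWithin (μ := (volume : Measure ℝ)) MeasurableSet.univ hcod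
      rw [Measure.restrict_univ] at this
      exact this)
  have hcont : Continuous F := continuous_iff_continuousAt.mpr fun x => (hF x).continuousAt
  refine (h.aestronglyMeasurable.mul hcont.measurable.inv.aestronglyMeasurable).congr ?_
  filter_upwards [hae] with y hy
  simp [hy]

/-! ### Weighted integral estimates -/

theorem exists_abs_integral_le {N : ℕ} (hN : 2 ≤ N) {a : ℝ} (ha : 0 < a) :
    ∃ C > 0, ∀ p : ℝ, 1 ≤ p → ∀ K : ℝ, 0 ≤ K → ∀ u : ℝ → ℝ,
      (∀ y > 0, |u y| ≤ K * (exp (-a * |Rr N y - p|) * Rr N y)) →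
      |∫ y in Set.Ioi (0 : ℝ), u y| ≤ C * K * p ^ (N - 1) := by
  obtain ⟨C, hC, h_int⟩ := exists_integral_exp_Rr_le hN ha
  refine ⟨C, hC, fun p hp K hK u hu => ?_⟩
  obtain ⟨h1, h2⟩ := h_int p hp
  have h3 := norm_integral_le_of_norm_le (f := u) (h1.const_mul K)
    ((ae_restrict_mem measurableSet_Ioi).mono fun y hy => (hu y hy : ‖u y‖ ≤ _))
  rw [integral_const_mul, Real.norm_eq_abs] at h3
  exact h3.trans ((mul_le_mul_of_nonneg_left h2 hK).trans (le_of_eq (by ring)))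

/-- Sum of two integrals of an arbitrary function `ψ` against analytic weights: the combined bound
holds even if `ψ` is not measurable, since then both integrals vanish. -/
theorem exists_abs_integral_add_integral_le {N : ℕ} (hN : 2 ≤ N) {a : ℝ} (ha : 0 < a) :
    ∃ C > 0, ∀ p : ℝ, 1 ≤ p → ∀ K : ℝ, 0 ≤ K → ∀ ψ F G : ℝ → ℝ,
      (∀ y, AnalyticAt ℝ F y) → (∃ y, F y ≠ 0) → (∀ y, AnalyticAt ℝ G y) → (∃ y, G y ≠ 0) →
      (∃ K' : ℝ, ∀ y > 0, |ψ y * F y| ≤ K' * (exp (-a * |Rr N y - p|) * Rr N y)) →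
      (∃ K' : ℝ, ∀ y > 0, |ψ y * G y| ≤ K' * (exp (-a * |Rr N y - p|) * Rr N y)) →
      (∀ y > 0, |ψ y * (F y + G y)| ≤ K * (exp (-a * |Rr N y - p|) * Rr N y)) →
      |(∫ y in Set.Ioi (0 : ℝ), ψ y * F y) + ∫ y in Set.Ioi (0 : ℝ), ψ y * G y| ≤
        C * K * p ^ (N - 1) := by
  obtain ⟨C₀, -, h_int⟩ := exists_integral_exp_Rr_le hN ha
  obtain ⟨C, hC, hle⟩ := exists_abs_integral_le hN ha
  refine ⟨C, hC, fun p hp K hK ψ F G hF ⟨y₁, hy₁⟩ hG ⟨y₂, hy₂⟩ ⟨K₁, hK₁⟩ ⟨K₂, hK₂⟩ hFG => ?_⟩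
  by_cases hψ : AEStronglyMeasurable ψ (volume.restrict (Set.Ioi (0 : ℝ)))
  · have int : ∀ H : ℝ → ℝ, (∀ y, AnalyticAt ℝ H y) → ∀ K' : ℝ,
        (∀ y > 0, |ψ y * H y| ≤ K' * (exp (-a * |Rr N y - p|) * Rr N y)) →
        IntegrableOn (fun y => ψ y * H y) (Set.Ioi 0) := by
      intro H hH K' hK'
      have hcont : Continuous H := continuous_iff_continuousAt.mpr fun x => (hH x).continuousAt
      exact ((h_int p hp).1.const_mul K').mono' (hψ.mul hcont.aestronglyMeasurable)
        ((ae_restrict_mem measurableSet_Ioi).mono fun y hy => hK' y hy)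
    rw [← integral_add (int F hF K₁ hK₁) (int G hG K₂ hK₂)]
    refine hle p hp K hK _ fun y hy => ?_
    rw [← mul_add]
    exact hFG y hy
  · rw [integral_undef fun h => hψ (aestronglyMeasurable_of_integrableOn_mul hF hy₁ h),
      integral_undef fun h => hψ (aestronglyMeasurable_of_integrableOn_mul hG hy₂ h), add_zero,
      abs_zero]
    positivity

theorem exp_weight_mul_le {σ e X : ℝ} (hσ : 0 < σ) :
    exp (σ * (-e + min X (e / 2))) * exp (-√2 * X) ≤ exp (-σ * e) * exp (-(√2 - σ) * X) := by
  rw [← exp_add, ← exp_add]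
  have := mul_le_mul_of_nonneg_left (min_le_left X (e / 2)) hσ.le
  exact exp_le_exp.mpr (by linarith)

theorem exp_min_mul_min_le {σ e X : ℝ} (hσ : 0 < σ) (hσ2 : σ < √2) (hX : 0 ≤ X) :
    exp (σ * min X (e / 2)) * min 1 (exp (√2 * (X - e))) ≤
      exp (-(√2 / 2) * e) * exp ((√2 + σ) / 2 * X) := by
  rw [← exp_add]
  rcases le_total X (e / 2) with h | h
  · rw [min_eq_left h]
    refine (mul_le_mul_of_nonneg_left (min_le_right _ _) (exp_pos _).le).trans ?_
    rw [← exp_add]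
    exact exp_le_exp.mpr (by nlinarith)
  · rw [min_eq_right h]
    rcases le_total e X with h' | h'
    · refine (mul_le_mul_of_nonneg_left (min_le_left _ _) (exp_pos _).le).trans ?_
      rw [mul_one]
      exact exp_le_exp.mpr (by nlinarith)
    · refine (mul_le_mul_of_nonneg_left (min_le_right _ _) (exp_pos _).le).trans ?_
      rw [← exp_add]
      exact exp_le_exp.mpr (by nlinarith)

/-- Integrals of functions controlled by the weight against a decaying profile. -/
theorem exists_abs_integral_mul_profile_le {N : ℕ} (hN : 2 ≤ N) {σ : ℝ} (hσ : 0 < σ)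
    (hσ2 : σ < √2) :
    ∃ C > 0, ∀ p : ℝ, 1 ≤ p → ∀ e A : ℝ, 0 ≤ A → ∀ u F : ℝ → ℝ,
      (∀ s, |F s| ≤ 4 * exp (-√2 * |s|)) →
      (∀ y > 0, |u y| ≤ A * exp (σ * (-e + min |Rr N y - p| (e / 2)))) →
      |∫ y in Set.Ioi (0 : ℝ), u y * F (Rr N y - p) * Rr N y| ≤
        C * A * exp (-σ * e) * p ^ (N - 1) := by
  obtain ⟨C, hC, hle⟩ := exists_abs_integral_le hN (sub_pos.mpr hσ2)
  refine ⟨4 * C, by positivity, fun p hp e A hA u F hF hu => ?_⟩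
  refine (hle p hp (4 * A * exp (-σ * e)) (by positivity) _ fun y hy => ?_).trans
    (le_of_eq (by ring))
  have hr := Rr_pos N y
  rw [abs_mul, abs_mul, abs_of_pos hr]
  calc |u y| * |F (Rr N y - p)| * Rr N y
      ≤ A * exp (σ * (-e + min |Rr N y - p| (e / 2))) * (4 * exp (-√2 * |Rr N y - p|)) *
        Rr N y := by
        gcongr
        exacts [hu y hy, hF _]
    _ = 4 * A * (exp (σ * (-e + min |Rr N y - p| (e / 2))) * exp (-√2 * |Rr N y - p|)) *
        Rr N y := by ring
    _ ≤ 4 * A * (exp (-σ * e) * exp (-(√2 - σ) * |Rr N y - p|)) * Rr N y := by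
        refine mul_le_mul_of_nonneg_right ?_ hr.le
        exact mul_le_mul_of_nonneg_left (exp_weight_mul_le hσ) (by positivity)
    _ = _ := by ring

theorem hasDerivAt_w2_comp_Rr_mul (N : ℕ) (p y : ℝ) :
    HasDerivAt (fun s => w2 (Rr N s - p) * s)
      (-(f1 (w (Rr N y - p)) * w1 (Rr N y - p)) *
        (y * Rr N y / (((N : ℝ) - 1) * (1 + y ^ 2))) * y + w2 (Rr N y - p)) y := by
  have h := ((hasDerivAt_w2 (Rr N y - p)).comp y ((hasDerivAt_Rr N y).sub_const p)).mul
    (hasDerivAt_id y)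
  refine HasDerivAt.congr_deriv h ?_
  simp

theorem mul_deriv_w2_comp_Rr_mul {N : ℕ} (hN : 2 ≤ N) (p y : ℝ) :
    ((N : ℝ) - 1) * deriv (fun s => w2 (Rr N s - p) * s) y =
      -(f1 (w (Rr N y - p)) * w1 (Rr N y - p) * Rr N y) +
        (f1 (w (Rr N y - p)) * w1 (Rr N y - p) * (Rr N y / (1 + y ^ 2)) +
          ((N : ℝ) - 1) * w2 (Rr N y - p)) := by
  have hM := sub_one_pos_of_two_le hN
  have h0 : (0 : ℝ) < 1 + y ^ 2 := by positivity
  rw [(hasDerivAt_w2_comp_Rr_mul N p y).deriv]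
  field_simp
  ring

theorem analyticAt_deriv_w2_comp_Rr_mul (N : ℕ) (p y : ℝ) :
    AnalyticAt ℝ (deriv fun s => w2 (Rr N s - p) * s) y :=
  (((analyticAt_w2 _).comp ((analyticAt_Rr N y).sub analyticAt_const)).mul analyticAt_id).deriv

theorem abs_f1_w_le (s : ℝ) : |f1 (w s)| ≤ 2 := by
  have h := abs_w_le_one s
  rw [f1_eq, abs_le]
  constructor <;> nlinarith [sq_nonneg (w s), abs_nonneg (w s), sq_abs (w s)]

theorem Rr_div_le_one {N : ℕ} (hN : 2 ≤ N) (y : ℝ) : Rr N y / (1 + y ^ 2) ≤ 1 := by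
  have h1 := one_le_Rr hN y
  have h2 := Rr_le_pow hN y
  rw [div_le_one (by positivity), ← Rr_pow hN y]
  nlinarith

/-- The two terms of the projection involving second derivatives nearly cancel. -/
theorem exists_abs_linear_part_le {N : ℕ} (hN : 2 ≤ N) {σ : ℝ} (hσ : 0 < σ) (hσ2 : σ < √2)
    {D : ℝ} (hD : 0 < D) :
    ∃ C > 0, ∀ p : ℝ, 1 < p → ∀ e A : ℝ, 0 ≤ A → ∀ ψ Z : ℝ → ℝ,
      (∀ r, AnalyticAt ℝ Z r) → (∃ y, f1 (Z (Rr N y)) ≠ 0) →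
      (∀ r, |f1 (Z r) - f1 (w (r - p))| ≤ D * min 1 (exp (√2 * (|r - p| - e)))) →
      (∀ y > 0, |ψ y| ≤ A * exp (σ * (-e + min |Rr N y - p| (e / 2)))) →
      |((N : ℝ) - 1) *
          (∫ y in Set.Ioi (0 : ℝ), ψ y * deriv (fun s => w2 (Rr N s - p) * s) y) +
        ∫ y in Set.Ioi (0 : ℝ), f1 (Z (Rr N y)) * ψ y * w1 (Rr N y - p) * Rr N y| ≤
        C * A * exp (-σ * e) * (exp (-(√2 / 2) * e) + 1 / p) * p ^ (N - 1) := by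
  have hκ : 0 < (√2 - σ) / 2 := by linarith
  have hM := sub_one_pos_of_two_le hN
  obtain ⟨C₁, hC₁, hpoly⟩ := exists_one_add_pow_le 1 hκ
  obtain ⟨C, hC, hle⟩ := exists_abs_integral_add_integral_le hN hκ
  set L := 4 * D + (8 + 8 * ((N : ℝ) - 1)) * C₁ with hL
  have hL0 : 0 < L := by positivity
  refine ⟨C * L, by positivity, fun p hp e A hA ψ Z hZan hZne hZ hψ => ?_⟩
  have hp0 : 0 < p := by linarith
  have hw1le : ∀ s, w1 s ≤ 4 * exp (-√2 * |s|) := fun s => by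
    refine (w1_le s).trans (mul_le_mul_of_nonneg_right ?_ (exp_pos _).le)
    nlinarith [Real.sq_sqrt (show (0 : ℝ) ≤ 2 by norm_num), Real.sqrt_nonneg 2]
  have hw2le : ∀ s, |w2 s| ≤ 8 * exp (-√2 * |s|) := fun s => by
    refine (abs_w2_le s).trans ?_
    have h1 : √2 ≤ 2 := by
      nlinarith [Real.sq_sqrt (show (0 : ℝ) ≤ 2 by norm_num), Real.sqrt_nonneg 2]
    have h2 := hw1le s
    have h3 := (w1_pos s).le
    nlinarith [Real.sqrt_nonneg 2]
  set F : ℝ → ℝ := fun y => ((N : ℝ) - 1) * deriv (fun s => w2 (Rr N s - p) * s) y with hF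
  set G : ℝ → ℝ := fun y => f1 (Z (Rr N y)) * w1 (Rr N y - p) * Rr N y with hG
  have hsplit : ∀ y, F y + G y =
      (f1 (Z (Rr N y)) - f1 (w (Rr N y - p))) * w1 (Rr N y - p) * Rr N y +
        (f1 (w (Rr N y - p)) * w1 (Rr N y - p) * (Rr N y / (1 + y ^ 2)) +
          ((N : ℝ) - 1) * w2 (Rr N y - p)) := by
    intro y
    rw [hF, hG]
    simp only [mul_deriv_w2_comp_Rr_mul hN]
    ring
  -- the lower order terms, without a factor `Rr N y`
  have hlow : ∀ y, |f1 (w (Rr N y - p)) * w1 (Rr N y - p) * (Rr N y / (1 + y ^ 2)) +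
      ((N : ℝ) - 1) * w2 (Rr N y - p)| ≤
        (8 + 8 * ((N : ℝ) - 1)) * exp (-√2 * |Rr N y - p|) := by
    intro y
    have hr := Rr_pos N y
    have h1 : |f1 (w (Rr N y - p)) * w1 (Rr N y - p) * (Rr N y / (1 + y ^ 2))| ≤
        2 * (4 * exp (-√2 * |Rr N y - p|)) * 1 := by
      rw [abs_mul, abs_mul, abs_of_pos (w1_pos _),
        abs_of_pos (show 0 < Rr N y / (1 + y ^ 2) by positivity)]
      have := (w1_pos (Rr N y - p)).le
      gcongr
      exacts [abs_f1_w_le _, hw1le _, Rr_div_le_one hN y]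
    have h2 : |((N : ℝ) - 1) * w2 (Rr N y - p)| ≤
        ((N : ℝ) - 1) * (8 * exp (-√2 * |Rr N y - p|)) := by
      rw [abs_mul, abs_of_pos hM]
      exact mul_le_mul_of_nonneg_left (hw2le _) hM.le
    refine (abs_add_le _ _).trans ((add_le_add h1 h2).trans (le_of_eq (by ring)))
  -- absorbing the missing factor
  have habsorb : ∀ y, 1 ≤ C₁ * exp ((√2 - σ) / 2 * |Rr N y - p|) * Rr N y * (1 / p) := by
    intro y
    have hr := one_le_Rr hN y
    have h1 := hpoly |Rr N y - p| (abs_nonneg _)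
    rw [pow_one] at h1
    have h2 : p ≤ (1 + |Rr N y - p|) * Rr N y := by
      nlinarith [neg_abs_le (Rr N y - p), abs_nonneg (Rr N y - p)]
    rw [mul_one_div, le_div_iff₀ hp0, one_mul]
    exact h2.trans (mul_le_mul_of_nonneg_right h1 (by linarith))
  have hexp : ∀ y, exp (σ * (-e + min |Rr N y - p| (e / 2))) * exp (-√2 * |Rr N y - p|) *
      exp ((√2 - σ) / 2 * |Rr N y - p|) ≤
        exp (-σ * e) * exp (-((√2 - σ) / 2) * |Rr N y - p|) := by
    intro y
    refine (mul_le_mul_of_nonneg_right (exp_weight_mul_le hσ) (exp_pos _).le).trans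
      (le_of_eq ?_)
    rw [mul_assoc, ← exp_add]
    ring_nf
  have hψlow : ∀ y > 0, |ψ y| * ((8 + 8 * ((N : ℝ) - 1)) * exp (-√2 * |Rr N y - p|)) ≤
      (8 + 8 * ((N : ℝ) - 1)) * C₁ * (A * exp (-σ * e)) * (1 / p) *
        (exp (-((√2 - σ) / 2) * |Rr N y - p|) * Rr N y) := by
    intro y hy
    have hr := Rr_pos N y
    calc |ψ y| * ((8 + 8 * ((N : ℝ) - 1)) * exp (-√2 * |Rr N y - p|))
        ≤ A * exp (σ * (-e + min |Rr N y - p| (e / 2))) *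
          ((8 + 8 * ((N : ℝ) - 1)) * exp (-√2 * |Rr N y - p|)) *
          (C₁ * exp ((√2 - σ) / 2 * |Rr N y - p|) * Rr N y * (1 / p)) := by
          refine (mul_le_mul_of_nonneg_right (hψ y hy) (by positivity)).trans ?_
          exact le_mul_of_one_le_right (by positivity) (habsorb y)
      _ = (8 + 8 * ((N : ℝ) - 1)) * C₁ * A * (1 / p) * Rr N y *
          (exp (σ * (-e + min |Rr N y - p| (e / 2))) * exp (-√2 * |Rr N y - p|) *
            exp ((√2 - σ) / 2 * |Rr N y - p|)) := by ring
      _ ≤ (8 + 8 * ((N : ℝ) - 1)) * C₁ * A * (1 / p) * Rr N y *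
          (exp (-σ * e) * exp (-((√2 - σ) / 2) * |Rr N y - p|)) := by
          exact mul_le_mul_of_nonneg_left (hexp y) (by positivity)
      _ = _ := by ring
  have hexp' : ∀ y, exp (σ * (-e + min |Rr N y - p| (e / 2))) * exp (-√2 * |Rr N y - p|) ≤
        exp (-σ * e) * exp (-((√2 - σ) / 2) * |Rr N y - p|) := fun y =>
    (le_mul_of_one_le_right (by positivity)
      (one_le_exp (mul_nonneg hκ.le (abs_nonneg _)))).trans (hexp y)
  have hcrude : ∀ b : ℝ, 0 ≤ b → ∀ y > 0, |ψ y| * (b * w1 (Rr N y - p) * Rr N y) ≤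
      4 * b * (A * exp (-σ * e)) * (exp (-((√2 - σ) / 2) * |Rr N y - p|) * Rr N y) := by
    intro b hb y hy
    have hr := Rr_pos N y
    have := w1_pos (Rr N y - p)
    calc |ψ y| * (b * w1 (Rr N y - p) * Rr N y)
        ≤ A * exp (σ * (-e + min |Rr N y - p| (e / 2))) *
          (b * (4 * exp (-√2 * |Rr N y - p|)) * Rr N y) := by
          gcongr
          exacts [hψ y hy, hw1le _]
      _ = 4 * b * A * Rr N y * (exp (σ * (-e + min |Rr N y - p| (e / 2))) *
          exp (-√2 * |Rr N y - p|)) := by ring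
      _ ≤ 4 * b * A * Rr N y * (exp (-σ * e) * exp (-((√2 - σ) / 2) * |Rr N y - p|)) := by
          exact mul_le_mul_of_nonneg_left (hexp' y) (by positivity)
      _ = _ := by ring
  have hmain : ∀ y > 0,
      |ψ y| * |(f1 (Z (Rr N y)) - f1 (w (Rr N y - p))) * w1 (Rr N y - p) * Rr N y| ≤
      4 * D * (A * exp (-σ * e)) * exp (-(√2 / 2) * e) *
        (exp (-((√2 - σ) / 2) * |Rr N y - p|) * Rr N y) := by
    intro y hy
    have hr := Rr_pos N y
    rw [abs_mul, abs_mul, abs_of_pos (w1_pos _), abs_of_pos hr]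
    set X := |Rr N y - p| with hX
    have hmin0 : 0 ≤ min 1 (exp (√2 * (X - e))) := le_min zero_le_one (exp_pos _).le
    calc |ψ y| * (|f1 (Z (Rr N y)) - f1 (w (Rr N y - p))| * w1 (Rr N y - p) * Rr N y)
        ≤ A * exp (σ * (-e + min X (e / 2))) *
          (D * min 1 (exp (√2 * (X - e))) * (4 * exp (-√2 * X)) * Rr N y) := by
          have := (w1_pos (Rr N y - p)).le
          gcongr
          exacts [hψ y hy, hZ _, hw1le _]
      _ = 4 * D * A * Rr N y * exp (-σ * e) * exp (-√2 * X) *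
          (exp (σ * min X (e / 2)) * min 1 (exp (√2 * (X - e)))) := by
          rw [mul_add σ, exp_add]
          ring_nf
      _ ≤ 4 * D * A * Rr N y * exp (-σ * e) * exp (-√2 * X) *
          (exp (-(√2 / 2) * e) * exp ((√2 + σ) / 2 * X)) := by
          exact mul_le_mul_of_nonneg_left (exp_min_mul_min_le hσ hσ2 (abs_nonneg _))
            (by positivity)
      _ = 4 * D * (A * exp (-σ * e)) * exp (-(√2 / 2) * e) *
          (exp (-√2 * X) * exp ((√2 + σ) / 2 * X) * Rr N y) := by ring
      _ = _ := by
          rw [← exp_add]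
          ring_nf
  have hfin := hle p hp.le (L * (A * exp (-σ * e)) * (exp (-(√2 / 2) * e) + 1 / p))
    (by positivity) ψ F G (fun y => analyticAt_const.mul (analyticAt_deriv_w2_comp_Rr_mul N p y))
    ⟨0, ?_⟩ (fun y => ?_) ?_ ?_ ?_ ?_
  · rw [← integral_const_mul]
    convert hfin using 1
    · congr 2
      · refine integral_congr_ae (Filter.Eventually.of_forall fun y => ?_)
        simp only [hF]
        ring
      · refine integral_congr_ae (Filter.Eventually.of_forall fun y => ?_)
        simp only [hG]
        ring
    · ring
  · rw [hF]
    simp only [(hasDerivAt_w2_comp_Rr_mul N p 0).deriv, Rr_zero]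
    simp only [mul_zero, zero_add]
    exact mul_ne_zero hM.ne' (w2_ne_zero (by linarith))
  · have hR := analyticAt_Rr N y
    have h1 : AnalyticAt ℝ (fun y => f1 (Z (Rr N y))) y := by
      simp only [f1_eq]
      exact analyticAt_const.sub (analyticAt_const.mul (((hZan _).comp hR).pow 2))
    exact (h1.mul ((analyticAt_w1 _).comp (hR.sub analyticAt_const))).mul hR
  · obtain ⟨y, hy⟩ := hZne
    exact ⟨y, mul_ne_zero (mul_ne_zero hy (w1_pos _).ne') (Rr_pos N y).ne'⟩
  · refine ⟨4 * 2 * (A * exp (-σ * e)) +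
      (8 + 8 * ((N : ℝ) - 1)) * C₁ * (A * exp (-σ * e)) * (1 / p), fun y hy => ?_⟩
    have hr := Rr_pos N y
    rw [hF, abs_mul]
    simp only [mul_deriv_w2_comp_Rr_mul hN]
    rw [add_mul]
    refine le_trans ?_ (add_le_add (hcrude 2 (by norm_num) y hy) (hψlow y hy))
    rw [← mul_add]
    refine mul_le_mul_of_nonneg_left ((abs_add_le _ _).trans (add_le_add ?_ (hlow y)))
      (abs_nonneg _)
    rw [abs_neg, abs_mul, abs_mul, abs_of_pos (w1_pos _), abs_of_pos hr]
    have := (w1_pos (Rr N y - p)).le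
    gcongr
    exact abs_f1_w_le _
  · refine ⟨4 * (D + 2) * (A * exp (-σ * e)), fun y hy => ?_⟩
    have hr := Rr_pos N y
    rw [hG, abs_mul]
    refine le_trans (mul_le_mul_of_nonneg_left ?_ (abs_nonneg _))
      (hcrude (D + 2) (by positivity) y hy)
    rw [abs_mul, abs_mul, abs_of_pos (w1_pos _), abs_of_pos hr]
    have h1 : |f1 (Z (Rr N y))| ≤ D + 2 := by
      have h2 := (hZ (Rr N y)).trans (mul_le_mul_of_nonneg_left (min_le_left _ _) hD.le)
      have h3 := abs_f1_w_le (Rr N y - p)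
      have h4 := abs_add_le (f1 (Z (Rr N y)) - f1 (w (Rr N y - p))) (f1 (w (Rr N y - p)))
      rw [sub_add_cancel] at h4
      linarith
    have := (w1_pos (Rr N y - p)).le
    gcongr
  · intro y hy
    rw [hsplit, abs_mul]
    have hr := Rr_pos N y
    refine (mul_le_mul_of_nonneg_left ((abs_add_le _ _).trans (add_le_add le_rfl (hlow y)))
      (abs_nonneg _)).trans ?_
    rw [mul_add]
    refine (add_le_add (hmain y hy) (hψlow y hy)).trans ?_
    rw [← add_mul]
    refine mul_le_mul_of_nonneg_right ?_ (by positivity)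
    have h1 : 0 ≤ (8 + 8 * ((N : ℝ) - 1)) * C₁ * (A * exp (-σ * e)) * exp (-(√2 / 2) * e) := by
      positivity
    have h2 : 0 ≤ 4 * D * (A * exp (-σ * e)) * (1 / p) := by positivity
    rw [hL]
    linarith

/-! ### Solvability of the projection system for fixed interfaces -/

theorem exists_f1_sum_w_ne_zero {N k : ℕ} (hN : 2 ≤ N) (hk : Even k) (p : ℕ → ℝ) :
    ∃ y, f1 ((∑ i ∈ Finset.Icc 1 k, (-1 : ℝ) ^ (i + 1) * w (Rr N y - p i)) - 1) ≠ 0 := by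
  have hsum : ∑ i ∈ Finset.Icc 1 k, (-1 : ℝ) ^ (i + 1) * 1 = 0 := by
    have h := sum_alternating_step (k + 1) k (by omega)
    rw [if_pos (by omega), hk.neg_one_pow, sub_self, zero_div] at h
    rw [← h]
    refine Finset.sum_congr rfl fun i hi => ?_
    rw [if_pos (by have := (Finset.mem_Icc.mp hi).2; omega)]
  have hlim : Filter.Tendsto
      (fun y => (∑ i ∈ Finset.Icc 1 k, (-1 : ℝ) ^ (i + 1) * w (Rr N y - p i)) - 1)
      Filter.atTop (nhds (0 - 1)) := by
    rw [← hsum]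
    refine Filter.Tendsto.sub_const (tendsto_finsetSum _ fun i _ => ?_) 1
    refine (tendsto_w_atTop.comp ?_).const_mul _
    exact Filter.tendsto_atTop_add_const_right _ _ (tendsto_Rr_atTop hN)
  have hlim2 := ((hlim.pow 2).const_mul 3).const_sub 1
  have hev := hlim2.eventually (gt_mem_nhds (show (1 : ℝ) - 3 * (0 - 1) ^ 2 < 0 by norm_num))
  obtain ⟨y, hy⟩ := hev.exists
  refine ⟨y, ?_⟩
  rw [f1_eq]
  exact hy.ne

theorem exists_abs_integral_w1_mul_w1_le {N k : ℕ} (hN : 2 ≤ N) (B : ℝ) :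
    ∃ C > 0, ∀ e : ℝ, 0 ≤ e → ∀ p : ℕ → ℝ, Spaced k p e B → (∀ j ∈ Finset.Icc 1 k, 1 < p j) →
      ∀ i ∈ Finset.Icc 1 k, ∀ j ∈ Finset.Icc 1 k, i ≠ j →
      |∫ y in Set.Ioi (0 : ℝ), w1 (Rr N y - p i) * w1 (Rr N y - p j) * Rr N y| ≤
        C * exp (-(√2 / 2) * e) * p j ^ (N - 1) := by
  have h2 : 0 < √2 / 2 := by positivity
  obtain ⟨C, hC, hle⟩ := exists_abs_integral_le hN h2
  refine ⟨C * (8 * exp (√2 / 2 * B)), by positivity, fun e he p hp hp1 i hi j hj hij => ?_⟩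
  refine (hle (p j) (hp1 j hj).le (8 * exp (√2 / 2 * B) * exp (-(√2 / 2) * e)) (by positivity) _
    fun y hy => ?_).trans (le_of_eq (by ring))
  have hr := Rr_pos N y
  have hwi := w1_pos (Rr N y - p i)
  have hwj := w1_pos (Rr N y - p j)
  rw [abs_of_pos (by positivity)]
  have hgap : e - B ≤ |Rr N y - p i| + |Rr N y - p j| := by
    refine (hp.abs_sub_ge he hi hj hij).trans ?_
    have h := abs_sub (Rr N y - p j) (Rr N y - p i)
    rw [show Rr N y - p j - (Rr N y - p i) = p i - p j by ring] at h
    linarith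
  calc w1 (Rr N y - p i) * w1 (Rr N y - p j) * Rr N y
      ≤ 2 * √2 * exp (-√2 * |Rr N y - p i|) * (2 * √2 * exp (-√2 * |Rr N y - p j|)) * Rr N y := by
        gcongr
        exacts [w1_le _, w1_le _]
    _ = 8 * (exp (-√2 * |Rr N y - p i|) * exp (-√2 * |Rr N y - p j|)) * Rr N y := by
        have := Real.mul_self_sqrt (show (0 : ℝ) ≤ 2 by norm_num)
        linear_combination
          4 * exp (-√2 * |Rr N y - p i|) * exp (-√2 * |Rr N y - p j|) * Rr N y * this
    _ ≤ 8 * (exp (√2 / 2 * B) * exp (-(√2 / 2) * e) * exp (-(√2 / 2) * |Rr N y - p j|)) *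
        Rr N y := by
        refine mul_le_mul_of_nonneg_right (mul_le_mul_of_nonneg_left ?_ (by norm_num)) hr.le
        rw [← exp_add, ← exp_add, ← exp_add]
        refine exp_le_exp.mpr ?_
        have h3 := mul_le_mul_of_nonneg_left hgap h2.le
        have h4 := mul_nonneg h2.le (abs_nonneg (Rr N y - p i))
        linarith
    _ = _ := by ring

theorem exists_projection_solution {N k : ℕ} (hN : 2 ≤ N) (hk : Even k) {σ B : ℝ} (hσ : 0 < σ)
    (hσ2 : σ < √2) (hB : 0 ≤ B) :
    ∃ C > 0, ∃ e₀ : ℝ, 0 ≤ e₀ ∧ ∀ e ≥ e₀, ∀ (P V Ψ G : ℝ) (p v : ℕ → ℝ) (ψ g : ℝ → ℝ),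
      0 < P → 0 ≤ V → 0 ≤ Ψ → 0 ≤ G → Spaced k p e B →
      (∀ j ∈ Finset.Icc 1 k, 1 < p j) → (∀ j ∈ Finset.Icc 1 k, P ≤ p j) →
      (∀ j ∈ Finset.Icc 1 k, |v j| ≤ V) →
      (∀ j ∈ Finset.Icc 1 k, ∀ y > 0,
        |ψ y| ≤ Ψ * exp (σ * (-e + min |Rr N y - p j| (e / 2)))) →
      (∀ j ∈ Finset.Icc 1 k, ∀ y > 0,
        |g y| ≤ G * exp (σ * (-e + min |Rr N y - p j| (e / 2)))) →
      ∃ d : ℕ → ℝ,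
        (∀ j ∈ Finset.Icc 1 k,
          (∑ i ∈ Finset.Icc 1 k, d i * ∫ y in Set.Ioi (0 : ℝ),
              w1 (Rr N y - p i) * w1 (Rr N y - p j) * Rr N y) =
            -v j * (∫ y in Set.Ioi (0 : ℝ), ψ y * w2 (Rr N y - p j) * Rr N y) +
            ((N : ℝ) - 1) *
              (∫ y in Set.Ioi (0 : ℝ), ψ y * deriv (fun s => w2 (Rr N s - p j) * s) y) +
            (∫ y in Set.Ioi (0 : ℝ),
              f1 ((∑ i ∈ Finset.Icc 1 k, (-1 : ℝ) ^ (i + 1) * w (Rr N y - p i)) - 1) * ψ y *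
                w1 (Rr N y - p j) * Rr N y) +
            (∫ y in Set.Ioi (0 : ℝ), g y * w1 (Rr N y - p j) * Rr N y)) ∧
        ∀ i ∈ Finset.Icc 1 k,
          |d i| ≤ C * exp (-σ * e) * (Ψ * (V + exp (-(√2 / 2) * e) + 1 / P) + G) := by
  obtain ⟨c, hc, hdiag⟩ := exists_le_integral_w1_sq hN
  obtain ⟨C₁, hC₁, hoff⟩ := exists_abs_integral_w1_mul_w1_le (k := k) hN B
  obtain ⟨C₂, hC₂, hprof⟩ := exists_abs_integral_mul_profile_le hN hσ hσ2
  obtain ⟨C₃, hC₃, hlin⟩ := exists_abs_linear_part_le hN hσ hσ2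
    (show 0 < 6 * ((k : ℝ) + 2) ^ 2 * exp (√2 * B) by positivity)
  have hsmall : ∀ᶠ e : ℝ in Filter.atTop, k * (C₁ * exp (-(√2 / 2) * e)) ≤ c / 2 := by
    have h1 : Filter.Tendsto (fun e : ℝ => k * (C₁ * exp (-(√2 / 2) * e))) Filter.atTop
        (nhds (k * (C₁ * 0))) := by
      refine (Filter.Tendsto.const_mul _ ?_).const_mul _
      exact tendsto_exp_atBot.comp
        (Filter.tendsto_id.const_mul_atTop_of_neg (by simp))
    rw [mul_zero, mul_zero] at h1
    exact (h1.eventually (gt_mem_nhds (half_pos hc))).mono fun e he => he.le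
  obtain ⟨e₁, he₁⟩ := Filter.eventually_atTop.mp hsmall
  refine ⟨(C₂ + C₃) / (c / 2), by positivity, max e₁ 0, le_max_right _ _, ?_⟩
  intro e he P V Ψ G p v ψ g hP hV hΨ hG hp hp1 hpP hv hψ hg
  have he0 : 0 ≤ e := (le_max_right _ _).trans he
  have hdom := he₁ e ((le_max_left _ _).trans he)
  have hw1le : ∀ s, w1 s ≤ 4 * exp (-√2 * |s|) := fun s => by
    refine (w1_le s).trans (mul_le_mul_of_nonneg_right ?_ (exp_pos _).le)
    nlinarith [Real.sq_sqrt (show (0 : ℝ) ≤ 2 by norm_num), Real.sqrt_nonneg 2]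
  have hw2le : ∀ s, |w2 s| ≤ 4 * exp (-√2 * |s|) := fun s => by
    have h1 := mul_le_mul_of_nonneg_left (w1_le s) (Real.sqrt_nonneg 2)
    have h2 := Real.mul_self_sqrt (show (0 : ℝ) ≤ 2 by norm_num)
    refine (abs_w2_le s).trans (h1.trans (le_of_eq ?_))
    linear_combination 2 * exp (-√2 * |s|) * h2
  set Z : ℝ → ℝ := fun r => (∑ i ∈ Finset.Icc 1 k, (-1 : ℝ) ^ (i + 1) * w (r - p i)) - 1 with hZ
  have hZan : ∀ r, AnalyticAt ℝ Z r := fun r => by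
    refine (Finset.analyticAt_fun_sum _ fun i _ => ?_).sub analyticAt_const
    exact analyticAt_const.mul ((analyticAt_w _).comp (analyticAt_id.sub analyticAt_const))
  set A : ℕ → ℕ → ℝ := fun i j =>
    ∫ y in Set.Ioi (0 : ℝ), w1 (Rr N y - p i) * w1 (Rr N y - p j) * Rr N y with hA
  set b : ℕ → ℝ := fun j =>
    -v j * (∫ y in Set.Ioi (0 : ℝ), ψ y * w2 (Rr N y - p j) * Rr N y) +
    ((N : ℝ) - 1) *
      (∫ y in Set.Ioi (0 : ℝ), ψ y * deriv (fun s => w2 (Rr N s - p j) * s) y) +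
    (∫ y in Set.Ioi (0 : ℝ), f1 (Z (Rr N y)) * ψ y * w1 (Rr N y - p j) * Rr N y) +
    (∫ y in Set.Ioi (0 : ℝ), g y * w1 (Rr N y - p j) * Rr N y) with hb
  have hb_le : ∀ j ∈ Finset.Icc 1 k, |b j| ≤
      (C₂ + C₃) * exp (-σ * e) * (Ψ * (V + exp (-(√2 / 2) * e) + 1 / P) + G) *
        p j ^ (N - 1) := by
    intro j hj
    have hpj := hp1 j hj
    have hpj0 : 0 < p j := by linarith
    have b1 := hprof (p j) hpj.le e Ψ hΨ ψ w2 hw2le (hψ j hj)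
    have b2 := hlin (p j) hpj e Ψ hΨ ψ Z hZan (exists_f1_sum_w_ne_zero hN hk p)
      (fun r => abs_f1_sub_le hk hj he0 hB hp r) (hψ j hj)
    have b3 := hprof (p j) hpj.le e G hG g w1
      (fun s => by rw [abs_of_pos (w1_pos s)]; exact hw1le s) (hg j hj)
    have b4 : |-v j * (∫ y in Set.Ioi (0 : ℝ), ψ y * w2 (Rr N y - p j) * Rr N y)| ≤
        V * (C₂ * Ψ * exp (-σ * e) * p j ^ (N - 1)) := by
      rw [abs_mul, abs_neg]
      exact mul_le_mul (hv j hj) b1 (abs_nonneg _) hV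
    have b5 : C₃ * Ψ * exp (-σ * e) * (exp (-(√2 / 2) * e) + 1 / p j) * p j ^ (N - 1) ≤
        C₃ * Ψ * exp (-σ * e) * (exp (-(√2 / 2) * e) + 1 / P) * p j ^ (N - 1) := by
      have := hpP j hj
      gcongr
    have b6 := abs_add_le (-v j * (∫ y in Set.Ioi (0 : ℝ), ψ y * w2 (Rr N y - p j) * Rr N y) +
      (((N : ℝ) - 1) *
        (∫ y in Set.Ioi (0 : ℝ), ψ y * deriv (fun s => w2 (Rr N s - p j) * s) y) +
      (∫ y in Set.Ioi (0 : ℝ), f1 (Z (Rr N y)) * ψ y * w1 (Rr N y - p j) * Rr N y)))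
      (∫ y in Set.Ioi (0 : ℝ), g y * w1 (Rr N y - p j) * Rr N y)
    rw [← add_assoc] at b6
    have b7 := abs_add_le (-v j * (∫ y in Set.Ioi (0 : ℝ), ψ y * w2 (Rr N y - p j) * Rr N y))
      (((N : ℝ) - 1) *
        (∫ y in Set.Ioi (0 : ℝ), ψ y * deriv (fun s => w2 (Rr N s - p j) * s) y) +
      (∫ y in Set.Ioi (0 : ℝ), f1 (Z (Rr N y)) * ψ y * w1 (Rr N y - p j) * Rr N y))
    rw [← add_assoc] at b7
    have hX : 0 ≤ exp (-σ * e) * p j ^ (N - 1) := by positivity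
    have r1 : 0 ≤ C₃ * V * Ψ * (exp (-σ * e) * p j ^ (N - 1)) := by positivity
    have r2 : 0 ≤ C₃ * G * (exp (-σ * e) * p j ^ (N - 1)) := by positivity
    have r3 : 0 ≤ C₂ * Ψ * (exp (-(√2 / 2) * e) + 1 / P) * (exp (-σ * e) * p j ^ (N - 1)) := by
      positivity
    rw [hb]
    linarith
  have hdom_diag : ∀ j ∈ Finset.Icc 1 k,
      ∑ i ∈ (Finset.Icc 1 k).erase j, |A i j / p j ^ (N - 1)| + c / 2 ≤
        A j j / p j ^ (N - 1) := by
    intro j hj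
    have hpj0 : 0 < p j ^ (N - 1) := pow_pos (by linarith [hp1 j hj]) _
    have h1 : ∑ i ∈ (Finset.Icc 1 k).erase j, |A i j / p j ^ (N - 1)| ≤
        k * (C₁ * exp (-(√2 / 2) * e)) := by
      have hcard : (((Finset.Icc 1 k).erase j).card : ℝ) ≤ k := by
        exact_mod_cast (Finset.card_le_card (Finset.erase_subset _ _)).trans (by simp)
      refine (Finset.sum_le_card_nsmul _ _ (C₁ * exp (-(√2 / 2) * e)) fun i hi => ?_).trans ?_
      · obtain ⟨hij, hi⟩ := Finset.mem_erase.mp hi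
        rw [abs_div, abs_of_pos hpj0, div_le_iff₀ hpj0]
        exact hoff e he0 p hp hp1 i hi j hj hij
      · rw [nsmul_eq_mul]
        gcongr
    have h2 : c ≤ A j j / p j ^ (N - 1) := by
      rw [le_div_iff₀ hpj0]
      exact hdiag (p j) (hp1 j hj).le
    linarith
  have hrhs : ∀ j ∈ Finset.Icc 1 k, |b j / p j ^ (N - 1)| ≤
      (C₂ + C₃) * exp (-σ * e) * (Ψ * (V + exp (-(√2 / 2) * e) + 1 / P) + G) := by
    intro j hj
    have hpj0 : 0 < p j ^ (N - 1) := pow_pos (by linarith [hp1 j hj]) _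
    rw [abs_div, abs_of_pos hpj0, div_le_iff₀ hpj0]
    exact hb_le j hj
  obtain ⟨d, hd, hdle⟩ := exists_solution_of_diag_dominant (Finset.Icc 1 k)
    (fun i j => A i j / p j ^ (N - 1)) (fun j => b j / p j ^ (N - 1)) (half_pos hc)
    hdom_diag hrhs
  refine ⟨d, fun j hj => ?_, fun i hi => (hdle i hi).trans (le_of_eq (by ring))⟩
  have hpj0 : 0 < p j ^ (N - 1) := pow_pos (by linarith [hp1 j hj]) _
  have h1 := hd j hj
  simp only [mul_div_assoc'] at h1
  rw [← Finset.sum_div, div_left_inj' hpj0.ne'] at h1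
  exact h1

/-! ### The moving interfaces -/

theorem SmallH.bounds {k : ℕ} {h : ℕ → ℝ → ℝ} (hh : SmallH k 2 h) {j : ℕ}
    (hj : j ∈ Finset.Icc 1 k) {t : ℝ} (ht : t ≤ -2) :
    |h j t| ≤ 1 ∧ |deriv (h j) t| ≤ log |t| / |t| := by
  obtain ⟨-, A, B, hAB, hA, hB⟩ := hh
  have h1 := hA j hj t ht
  have h2 := hB j hj t ht
  have ht2 : 2 ≤ |t| := by rw [abs_of_neg (by linarith)]; linarith
  have hlog : 0 < log |t| := log_pos (by linarith)
  have hB0 : 0 ≤ B := le_trans (by positivity) h2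
  have hA0 : 0 ≤ A := (abs_nonneg _).trans h1
  refine ⟨by linarith, ?_⟩
  have h3 : |t| / log |t| * |deriv (h j) t| ≤ 1 := by linarith
  rw [div_mul_eq_mul_div, div_le_one hlog] at h3
  rw [le_div_iff₀ (by linarith)]
  linarith

theorem SmallH.abs_sub_rho0_le {k : ℕ} {h : ℕ → ℝ → ℝ} (hh : SmallH k 2 h) (N : ℕ) (η : ℝ → ℝ)
    (γ : ℕ → ℝ) {j : ℕ} (hj : j ∈ Finset.Icc 1 k) {t : ℝ} (ht : t ≤ -2) (r : ℝ) :
    |r - rho0 N k η γ j t| ≤ |r - rho N k η γ h j t| + 1 := by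
  have h2 := abs_add_le (r - rho N k η γ h j t) (h j t)
  rw [show r - rho N k η γ h j t + h j t = r - rho0 N k η γ j t by rw [rho]; ring] at h2
  linarith [(hh.bounds hj ht).1]

theorem abs_le_sum_abs (γ : ℕ → ℝ) {k j : ℕ} (hj : j ∈ Finset.Icc 1 k) :
    |γ j| ≤ ∑ i ∈ Finset.Icc 1 k, |γ i| :=
  Finset.single_le_sum (f := fun i => |γ i|) (fun _ _ => abs_nonneg _) hj

theorem spaced_rho0 (N k : ℕ) (η : ℝ → ℝ) (γ : ℕ → ℝ) (t : ℝ) :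
    Spaced k (fun j => rho0 N k η γ j t) (η t) (2 * ∑ i ∈ Finset.Icc 1 k, |γ i|) := by
  intro i hi j hj
  have h1 : rho0 N k η γ i t - rho0 N k η γ j t - ((i : ℝ) - j) * η t = γ i - γ j := by
    simp only [rho0]
    ring
  rw [h1]
  linarith [abs_sub (γ i) (γ j), abs_le_sum_abs γ hi, abs_le_sum_abs γ hj]

theorem spaced_rho (N : ℕ) {k : ℕ} (η : ℝ → ℝ) (γ : ℕ → ℝ) {h : ℕ → ℝ → ℝ}
    (hh : SmallH k 2 h) {t : ℝ} (ht : t ≤ -2) :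
    Spaced k (fun j => rho N k η γ h j t) (η t) (2 * ∑ i ∈ Finset.Icc 1 k, |γ i| + 2) := by
  intro i hi j hj
  have h1 : rho N k η γ h i t - rho N k η γ h j t - ((i : ℝ) - j) * η t =
      rho0 N k η γ i t - rho0 N k η γ j t - ((i : ℝ) - j) * η t + (h i t - h j t) := by
    simp only [rho]
    ring
  have h2 : |rho0 N k η γ i t - rho0 N k η γ j t - ((i : ℝ) - j) * η t| ≤ _ :=
    spaced_rho0 N k η γ t i hi j hj
  rw [h1]
  have h3 := abs_add_le (rho0 N k η γ i t - rho0 N k η γ j t - ((i : ℝ) - j) * η t) (h i t - h j t)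
  linarith [abs_sub (h i t) (h j t), (hh.bounds hi ht).1, (hh.bounds hj ht).1]

theorem abs_index_sub_le {k j : ℕ} (hj : j ∈ Finset.Icc 1 k) :
    |(j : ℝ) - ((k : ℝ) + 1) / 2| ≤ k := by
  obtain ⟨h1, h2⟩ := Finset.mem_Icc.mp hj
  have h1' : (1 : ℝ) ≤ j := by exact_mod_cast h1
  have h2' : (j : ℝ) ≤ k := by exact_mod_cast h2
  rw [abs_le]
  constructor <;> linarith

theorem sqrt_abs_le_sqrt {N : ℕ} (hN : 2 ≤ N) {t : ℝ} (ht : t ≤ 0) :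
    √|t| ≤ √(-2 * ((N : ℝ) - 1) * t) := by
  have hN' : (2 : ℝ) ≤ N := by exact_mod_cast hN
  rw [abs_of_nonpos ht]
  exact Real.sqrt_le_sqrt (by nlinarith)

theorem log_div_le {x : ℝ} (hx : 0 < x) : log x / x ≤ 2 / √x := by
  have hs : 0 < √x := Real.sqrt_pos.mpr hx
  have h1 : log x ≤ 2 * √x := by
    have h2 : log x = 2 * log √x := by rw [Real.log_sqrt hx.le]; ring
    linarith [Real.log_le_sub_one_of_pos hs]
  have h3 : √x * √x = x := Real.mul_self_sqrt hx.le
  rw [div_le_div_iff₀ hx hs]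
  nlinarith

namespace Setting

variable {N k : ℕ} {η : ℝ → ℝ} {γ : ℕ → ℝ}

theorem eventually_sqrt_le_rho (S : Setting N k η γ) {h : ℕ → ℝ → ℝ} (hh : SmallH k 2 h) :
    ∀ᶠ t in Filter.atBot, ∀ j ∈ Finset.Icc 1 k, √|t| / 2 ≤ rho N k η γ h j t := by
  obtain ⟨_, -, hη⟩ := S.exists_eta_bounds
  have hk : (0 : ℝ) < k := by exact_mod_cast (show 0 < k by linarith [S.hk])
  have hsqrt : Filter.Tendsto (fun t : ℝ => √|t|) Filter.atBot Filter.atTop :=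
    Real.tendsto_sqrt_atTop.comp Filter.tendsto_abs_atBot_atTop
  filter_upwards [S.tendsto_eta_div_sqrt.eventually (gt_mem_nhds (show 0 < 1 / (4 * (k : ℝ)) by
    positivity)), hsqrt.eventually_ge_atTop (4 * (∑ i ∈ Finset.Icc 1 k, |γ i| + 1)),
    Filter.eventually_le_atBot (-2 : ℝ)] with t h1 h2 ht j hj
  have ht0 : 0 < √|t| := Real.sqrt_pos.mpr (abs_pos.mpr (by linarith))
  have hη0 := (hη t ht).1
  have h3 : k * η t ≤ √|t| / 4 := by
    rw [div_lt_iff₀ ht0] at h1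
    have h4 := mul_le_mul_of_nonneg_left h1.le hk.le
    have h5 : k * (1 / (4 * k) * √|t|) = √|t| / 4 := by field_simp
    linarith
  have h4 := mul_le_mul_of_nonneg_right (abs_index_sub_le hj) hη0
  have h5 := mul_le_mul_of_nonneg_right (neg_abs_le ((j : ℝ) - ((k : ℝ) + 1) / 2)) hη0
  have h6 := sqrt_abs_le_sqrt S.hN (show t ≤ 0 by linarith)
  have h7 := abs_le_sum_abs γ hj
  have h8 := (hh.bounds hj ht).1
  rw [rho, rho0]
  linarith [neg_abs_le (γ j), neg_abs_le (h j t)]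

theorem exists_abs_deriv_rho_le (S : Setting N k η γ) {h : ℕ → ℝ → ℝ} (hh : SmallH k 2 h) :
    ∃ D > 0, ∀ᶠ t in Filter.atBot, ∀ j ∈ Finset.Icc 1 k,
      |deriv (rho N k η γ h j) t| ≤ D / √|t| := by
  obtain ⟨C, hC, hη⟩ := S.exists_eta_bounds
  have hM := sub_one_pos_of_two_le S.hN
  have hβ := beta_pos
  refine ⟨((N : ℝ) - 1) + k * (1 + β * C * 2) + 2, by positivity, ?_⟩
  filter_upwards [S.tendsto_eta_div_sqrt.eventually (gt_mem_nhds (show (0 : ℝ) < 1 by norm_num)),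
    Filter.eventually_le_atBot (-2 : ℝ)] with t h1 ht j hj
  have habs : |t| = -t := abs_of_neg (by linarith)
  have ht0 : 0 < |t| := by rw [habs]; linarith
  have hs : 0 < √|t| := Real.sqrt_pos.mpr ht0
  have hss : √|t| * √|t| = |t| := Real.mul_self_sqrt ht0.le
  rw [div_lt_one hs] at h1
  obtain ⟨hη0, -, hη2⟩ := hη t ht
  have hlog := log_div_le ht0
  have hη' : |deriv η t| ≤ (1 + β * C * 2) / √|t| := by
    have h2 : deriv η t = -(η t / (2 * t)) - β * exp (-√2 * η t) := by
      linarith [S.hηode t (by linarith)]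
    have h3 : |η t / (2 * t)| ≤ 1 / √|t| := by
      rw [abs_div, abs_of_nonneg hη0, abs_mul, abs_of_pos (by norm_num : (0 : ℝ) < 2),
        div_le_div_iff₀ (by positivity) hs]
      nlinarith
    have h4 : |β * exp (-√2 * η t)| ≤ β * (C * (2 / √|t|)) := by
      rw [abs_of_pos (by positivity)]
      gcongr
      exact hη2.trans (by gcongr)
    rw [h2]
    refine (abs_sub _ _).trans ?_
    rw [abs_neg]
    refine (add_le_add h3 h4).trans (le_of_eq ?_)
    ring
  have hR := sqrt_abs_le_sqrt S.hN (show t ≤ 0 by linarith)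
  have hpos : 0 < -2 * ((N : ℝ) - 1) * t := by nlinarith
  have hd1 : HasDerivAt (fun t : ℝ => √(-2 * ((N : ℝ) - 1) * t))
      (-2 * ((N : ℝ) - 1) / (2 * √(-2 * ((N : ℝ) - 1) * t))) t := by
    have h2 := ((hasDerivAt_id t).const_mul (-2 * ((N : ℝ) - 1))).sqrt hpos.ne'
    simpa using h2
  have hd2 := (S.hηdiff t (by linarith)).hasDerivAt.const_mul ((j : ℝ) - ((k : ℝ) + 1) / 2)
  have hd3 := (hh.1 j hj t ht).hasDerivAt
  have hd : HasDerivAt (rho N k η γ h j) _ t := ((hd1.add hd2).add_const (γ j)).add hd3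
  rw [hd.deriv]
  have e1 : |-2 * ((N : ℝ) - 1) / (2 * √(-2 * ((N : ℝ) - 1) * t))| ≤ ((N : ℝ) - 1) / √|t| := by
    have h2 : -2 * ((N : ℝ) - 1) / (2 * √(-2 * ((N : ℝ) - 1) * t)) =
        -(((N : ℝ) - 1) / √(-2 * ((N : ℝ) - 1) * t)) := by
      have := hs.trans_le hR
      field_simp
    rw [h2, abs_neg, abs_of_pos (div_pos hM (hs.trans_le hR))]
    gcongr
  have e2 : |((j : ℝ) - ((k : ℝ) + 1) / 2) * deriv η t| ≤ k * ((1 + β * C * 2) / √|t|) := by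
    rw [abs_mul]
    exact mul_le_mul (abs_index_sub_le hj) hη' (abs_nonneg _) (Nat.cast_nonneg k)
  have e3 := (hh.bounds hj ht).2.trans hlog
  refine (abs_add_le _ _).trans ((add_le_add ((abs_add_le _ _).trans (add_le_add e1 e2)) e3).trans
    (le_of_eq ?_))
  ring

theorem exists_exp_eta_le (S : Setting N k η γ) {σ : ℝ} (hσ : 0 < σ) :
    ∃ C > 0, ∀ t ≤ -2, exp (-σ * η t) ≤ C * (log |t| / |t|) ^ (σ / √2) ∧
      exp (-(√2 / 2) * η t) ≤ C * (log |t| / |t|) ^ ((1 : ℝ) / 2) ∧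
      1 / √|t| ≤ C * (log |t| / |t|) ^ ((1 : ℝ) / 2) := by
  obtain ⟨C, hC, hη⟩ := S.exists_eta_bounds
  have h2 : (0 : ℝ) < √2 := by positivity
  have hlog2 : 0 < log 2 := log_pos (by norm_num)
  refine ⟨C ^ (σ / √2) + C ^ ((1 : ℝ) / 2) + 1 / √(log 2), by positivity, fun t ht => ?_⟩
  have ht2 : 2 ≤ |t| := by rw [abs_of_neg (by linarith)]; linarith
  have hL : 0 < log |t| / |t| := div_pos (log_pos (by linarith)) (by linarith)
  obtain ⟨-, -, hle⟩ := hη t ht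
  have key : ∀ a : ℝ, 0 < a → exp (-(√2 * a) * η t) ≤ C ^ a * (log |t| / |t|) ^ a := by
    intro a ha
    rw [← Real.mul_rpow hC.le hL.le]
    refine le_trans (le_of_eq ?_) (Real.rpow_le_rpow (exp_pos _).le hle ha.le)
    rw [← Real.exp_mul]
    ring_nf
  have k1 := key (σ / √2) (by positivity)
  have k2 := key ((1 : ℝ) / 2) (by norm_num)
  rw [mul_div_cancel₀ _ h2.ne'] at k1
  rw [mul_one_div] at k2
  have p1 : 0 < (log |t| / |t|) ^ (σ / √2) := by positivity
  have p2 : 0 < (log |t| / |t|) ^ ((1 : ℝ) / 2) := by positivity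
  have q1 : 0 < C ^ (σ / √2) := by positivity
  have q2 : 0 < C ^ ((1 : ℝ) / 2) := by positivity
  have q3 : 0 < 1 / √(log 2) := by positivity
  have k3 : 1 / √|t| ≤ 1 / √(log 2) * (log |t| / |t|) ^ ((1 : ℝ) / 2) := by
    rw [← Real.sqrt_eq_rpow, Real.sqrt_div' _ (abs_nonneg t), ← mul_div_assoc]
    gcongr
    rw [one_div_mul_eq_div, one_le_div (by positivity)]
    exact Real.sqrt_le_sqrt (log_le_log (by norm_num) ht2)
  refine ⟨k1.trans ?_, k2.trans ?_, k3.trans ?_⟩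
  · exact mul_le_mul_of_nonneg_right (by linarith) p1.le
  · exact mul_le_mul_of_nonneg_right (by linarith) p2.le
  · exact mul_le_mul_of_nonneg_right (by linarith) p2.le

end Setting

/-! ### The weighted norm -/

namespace IsPhi

variable {N k : ℕ} {η : ℝ → ℝ} {γ : ℕ → ℝ} {σ : ℝ} {Φ : ℝ → ℝ → ℝ}

theorem CNorm_nonneg (hΦ : IsPhi N k η γ σ Φ) (hN : 2 ≤ N) (hk : 2 ≤ k) (I : Set ℝ)
    (u : ℝ → ℝ → ℝ) : 0 ≤ CNorm N Φ I u := by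
  refine Real.sSup_nonneg ?_
  rintro _ ⟨⟨t, y⟩, ⟨-, hy⟩, rfl⟩
  have := hΦ.pos hk t (one_lt_Rr hN hy)
  positivity

theorem abs_le_CNorm_mul (hΦ : IsPhi N k η γ σ Φ) (hN : 2 ≤ N) (hk : 2 ≤ k) {I : Set ℝ}
    {u : ℝ → ℝ → ℝ} (hu : BddAbove (CSet N Φ I u)) {t y : ℝ} (ht : t ∈ I) (hy : 0 < y) :
    |u t y| ≤ CNorm N Φ I u * Φ t (Rr N y) := by
  rw [← div_le_iff₀ (hΦ.pos hk t (one_lt_Rr hN hy))]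
  exact le_csSup hu ⟨(t, y), ⟨ht, hy⟩, rfl⟩

theorem le_rho (hΦ : IsPhi N k η γ σ Φ) (hk : 2 ≤ k) (hσ : 0 < σ) {h : ℕ → ℝ → ℝ}
    (hh : SmallH k 2 h) {t : ℝ} (ht : t ≤ -2) (hη : 0 ≤ η t) {r : ℝ} (hr : 1 < r) {j : ℕ}
    (hj : j ∈ Finset.Icc 1 k) :
    Φ t r ≤ 2 * exp (σ * (4 * ∑ i ∈ Finset.Icc 1 k, |γ i| + 1)) *
      exp (σ * (-η t + min |r - rho N k η γ h j t| (η t / 2))) := by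
  refine (hΦ.le hk hσ hη (by positivity) (spaced_rho0 N k η γ t) hr hj).trans ?_
  rw [mul_assoc, ← exp_add, ← mul_add]
  refine mul_le_mul_of_nonneg_left (exp_le_exp.mpr (mul_le_mul_of_nonneg_left ?_ hσ.le))
    (by norm_num)
  have h1 := hh.abs_sub_rho0_le N η γ hj ht r
  have h2 : min |r - rho0 N k η γ j t| (η t / 2) ≤
      min |r - rho N k η γ h j t| (η t / 2) + 1 := by
    rw [← min_add_add_right]
    exact min_le_min h1 (by linarith)
  linarith

theorem w1_div_le (hΦ : IsPhi N k η γ σ Φ) (hk : 2 ≤ k) (hσ : 0 < σ) (hσ2 : σ < √2)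
    {h : ℕ → ℝ → ℝ} (hh : SmallH k 2 h) {t : ℝ} (ht : t ≤ -2) (hη : 0 ≤ η t) {r : ℝ}
    (hr : 1 < r) {j : ℕ} (hj : j ∈ Finset.Icc 1 k) :
    w1 (r - rho N k η γ h j t) / Φ t r ≤
      2 * √2 * exp (σ * (2 * ∑ i ∈ Finset.Icc 1 k, |γ i| + 1)) * exp (σ * η t) := by
  rw [div_le_iff₀ (hΦ.pos hk t hr)]
  refine (w1_le _).trans ?_
  refine le_trans ?_ (mul_le_mul_of_nonneg_left
    (hΦ.ge hk hσ hη (spaced_rho0 N k η γ t) hr hj) (by positivity))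
  rw [mul_assoc (2 * √2), mul_assoc (2 * √2), ← exp_add, ← exp_add]
  refine mul_le_mul_of_nonneg_left (exp_le_exp.mpr ?_) (by positivity)
  have h1 := hh.abs_sub_rho0_le N η γ hj ht r
  have h2 := mul_le_mul_of_nonneg_left h1 hσ.le
  have h3 := mul_le_mul_of_nonneg_right hσ2.le (abs_nonneg (r - rho N k η γ h j t))
  linarith

end IsPhi

/-- Solvability and estimates at all sufficiently negative times, in terms of `η`. -/
theorem Setting.exists_eventually_projection {N k : ℕ} {η : ℝ → ℝ} {γ : ℕ → ℝ}
    (S : Setting N k η γ) {σ : ℝ} (hσ : 0 < σ) (hσ2 : σ < √2) {h : ℕ → ℝ → ℝ}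
    (hh : SmallH k 2 h) {Φ : ℝ → ℝ → ℝ} (hΦ : IsPhi N k η γ σ Φ) :
    ∃ C > 0, ∀ᶠ t in Filter.atBot, ∀ (I : Set ℝ) (g ψ : ℝ → ℝ → ℝ), t ∈ I →
      BddAbove (CSet N Φ I g) → BddAbove (CSet N Φ I ψ) →
      ∃ d : ℕ → ℝ,
        ProjSystem N k (rho N k η γ h) (zfun N k η γ h) ψ g (fun i _ => d i) t ∧
        ∀ i ∈ Finset.Icc 1 k, |d i| ≤ C * exp (-σ * η t) *
          ((log |t| / |t|) ^ ((1 : ℝ) / 2) * CNorm N Φ I ψ + CNorm N Φ I g) := by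
  set B := 2 * ∑ i ∈ Finset.Icc 1 k, |γ i| + 2 with hB
  have hB0 : 0 ≤ B := by positivity
  set M := 2 * exp (σ * (4 * ∑ i ∈ Finset.Icc 1 k, |γ i| + 1)) with hM
  have hM0 : 0 < M := by positivity
  obtain ⟨C₁, hC₁, e₀, he₀, hsol⟩ := exists_projection_solution S.hN S.hkeven hσ hσ2 hB0
  obtain ⟨D, hD, hvel⟩ := S.exists_abs_deriv_rho_le hh
  obtain ⟨C₂, hC₂, hexp⟩ := S.exists_exp_eta_le hσ
  have hsqrt : Filter.Tendsto (fun t : ℝ => √|t|) Filter.atBot Filter.atTop :=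
    Real.tendsto_sqrt_atTop.comp Filter.tendsto_abs_atBot_atTop
  refine ⟨C₁ * M * ((D + 3) * C₂ + 1), by positivity, ?_⟩
  filter_upwards [hvel, S.eventually_sqrt_le_rho hh, S.tendsto_eta.eventually_ge_atTop e₀,
    hsqrt.eventually_gt_atTop 2, Filter.eventually_le_atBot (-2 : ℝ)]
    with t hv hrho hη hs ht I g ψ htI hg hψ
  have hη0 : 0 ≤ η t := he₀.trans hη
  have hnψ := hΦ.CNorm_nonneg S.hN S.hk I ψ
  have hng := hΦ.CNorm_nonneg S.hN S.hk I g
  have hweight : ∀ u : ℝ → ℝ → ℝ, BddAbove (CSet N Φ I u) → ∀ j ∈ Finset.Icc 1 k, ∀ y > 0,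
      |u t y| ≤ CNorm N Φ I u * M *
        exp (σ * (-η t + min |Rr N y - rho N k η γ h j t| (η t / 2))) := by
    intro u hu j hj y hy
    rw [mul_assoc]
    exact (hΦ.abs_le_CNorm_mul S.hN S.hk hu htI hy).trans (mul_le_mul_of_nonneg_left
      (hΦ.le_rho S.hk hσ hh ht hη0 (one_lt_Rr S.hN hy) hj) (hΦ.CNorm_nonneg S.hN S.hk I u))
  obtain ⟨d, hd, hdle⟩ := hsol (η t) hη (√|t| / 2) (D / √|t|) (CNorm N Φ I ψ * M)
    (CNorm N Φ I g * M) (fun j => rho N k η γ h j t) (fun j => deriv (rho N k η γ h j) t)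
    (ψ t) (g t) (by positivity) (by positivity) (by positivity) (by positivity)
    (spaced_rho N η γ hh ht) (fun j hj => by linarith [hrho j hj]) hrho hv (hweight ψ hψ)
    (hweight g hg)
  refine ⟨d, hd, fun i hi => (hdle i hi).trans ?_⟩
  obtain ⟨-, h1, h2⟩ := hexp t ht
  set L := (log |t| / |t|) ^ ((1 : ℝ) / 2) with hL
  have hε : D / √|t| + exp (-(√2 / 2) * η t) + 1 / (√|t| / 2) ≤ ((D + 3) * C₂ + 1) * L := by
    have h3 : D / √|t| + 1 / (√|t| / 2) = (D + 2) * (1 / √|t|) := by field_simp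
    have h4 := mul_le_mul_of_nonneg_left h2 (show 0 ≤ D + 2 by linarith)
    have h5 : 0 ≤ L := by
      have : 0 ≤ C₂ * L := (exp_pos _).le.trans h1
      exact nonneg_of_mul_nonneg_right this hC₂
    linarith
  have hone : 1 ≤ (D + 3) * C₂ + 1 := le_add_of_nonneg_left (by positivity)
  calc C₁ * exp (-σ * η t) *
      (CNorm N Φ I ψ * M * (D / √|t| + exp (-(√2 / 2) * η t) + 1 / (√|t| / 2)) +
        CNorm N Φ I g * M)
      ≤ C₁ * exp (-σ * η t) * (CNorm N Φ I ψ * M * (((D + 3) * C₂ + 1) * L) +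
        CNorm N Φ I g * M * ((D + 3) * C₂ + 1)) := by
        refine mul_le_mul_of_nonneg_left (add_le_add (mul_le_mul_of_nonneg_left hε ?_) ?_) ?_
        · positivity
        · exact le_mul_of_one_le_right (by positivity) hone
        · positivity
    _ = _ := by ring

/-- **Solvability of the nearly diagonal projection system and estimates on `d_i`.** -/
theorem stmt_8 (N k : ℕ) (η : ℝ → ℝ) (γ : ℕ → ℝ) (S : Setting N k η γ)
    (σ : ℝ) (hσ : σ ∈ Set.Ioo 0 (Real.sqrt 2))
    (h : ℕ → ℝ → ℝ) (hh : SmallH k 2 h)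
    (Φ : ℝ → ℝ → ℝ) (hΦ : IsPhi N k η γ σ Φ) :
    ∃ T > (2 : ℝ), ∃ c > (0 : ℝ), ∀ s : ℝ, s < -T → ∀ g ψ : ℝ → ℝ → ℝ,
      ContinuousOn (fun p : ℝ × ℝ => g p.1 p.2) (Set.Ioo s (-T) ×ˢ Set.Ioi (0 : ℝ)) →
      BddAbove (CSet N Φ (Set.Ioo s (-T)) g) →
      BddAbove (CSet N Φ (Set.Ioo s (-T)) ψ) →
      ∃ d : ℕ → ℝ → ℝ,
        (∀ t ∈ Set.Ioo s (-T),
          ProjSystem N k (rho N k η γ h) (zfun N k η γ h) ψ g d t) ∧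
        ∀ i ∈ Finset.Icc 1 k, ∀ t ∈ Set.Icc s (-T),
          (|d i t| ≤
            c * (Real.log |t| / |t|) ^ ((Real.sqrt 2 + σ) / (2 * Real.sqrt 2)) *
              CNorm N Φ (Set.Ioo s (-T)) ψ +
            c * (Real.log |t| / |t|) ^ (σ / Real.sqrt 2) *
              CNorm N Φ (Set.Ioo s (-T)) g) ∧
          ∀ r : ℝ, 1 < r →
            |d i t * w1 (r - rho N k η γ h i t) / Φ t r| ≤
              c * (Real.log |t| / |t|) ^ ((1 : ℝ) / 2) * CNorm N Φ (Set.Ioo s (-T)) ψ +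
              c * CNorm N Φ (Set.Ioo s (-T)) g := by
  obtain ⟨hσ0, hσ2⟩ := hσ
  obtain ⟨C, hC, hev⟩ := S.exists_eventually_projection hσ0 hσ2 hh hΦ
  obtain ⟨C₁, hC₁, hexp⟩ := S.exists_exp_eta_le hσ0
  obtain ⟨_, -, hη⟩ := S.exists_eta_bounds
  obtain ⟨a, ha⟩ := Filter.eventually_atBot.mp hev
  set M := 2 * √2 * exp (σ * (2 * ∑ i ∈ Finset.Icc 1 k, |γ i| + 1)) with hM
  have hM0 : 0 < M := by positivity
  refine ⟨max 3 (-a), lt_max_of_lt_left (by norm_num), C * (C₁ + M), by positivity, ?_⟩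
  intro s hs g ψ _ hg hψ
  have hT : ∀ t ≤ -max 3 (-a), t ≤ -2 ∧ t ≤ a := fun t ht =>
    ⟨by linarith [le_max_left 3 (-a)], by linarith [le_max_right 3 (-a)]⟩
  set I := Set.Ioo s (-max 3 (-a)) with hI
  have hnψ := hΦ.CNorm_nonneg S.hN S.hk I ψ
  have hng := hΦ.CNorm_nonneg S.hN S.hk I g
  have hex : ∀ t, ∃ d : ℕ → ℝ,
      (t ∈ I → ProjSystem N k (rho N k η γ h) (zfun N k η γ h) ψ g (fun i _ => d i) t) ∧
      ∀ i ∈ Finset.Icc 1 k, t ≤ -max 3 (-a) → |d i| ≤ C * exp (-σ * η t) *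
        ((log |t| / |t|) ^ ((1 : ℝ) / 2) * CNorm N Φ I ψ + CNorm N Φ I g) := by
    intro t
    by_cases ht : t ∈ I
    · obtain ⟨d, hd, hdle⟩ := ha t (hT t ht.2.le).2 I g ψ ht hg hψ
      exact ⟨d, fun _ => hd, fun i hi _ => hdle i hi⟩
    · refine ⟨0, fun h => absurd h ht, fun i _ ht' => ?_⟩
      have hlog : 0 ≤ log |t| / |t| := by
        refine div_nonneg (log_nonneg ?_) (abs_nonneg t)
        rw [abs_of_neg] <;> linarith [(hT t ht').1]
      simp only [Pi.zero_apply, abs_zero]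
      positivity
  choose d hd hdle using hex
  refine ⟨fun i t => d t i, fun t ht => hd t ht, fun i hi t ht => ?_⟩
  obtain ⟨ht2, -⟩ := hT t ht.2
  have hbound := hdle t i hi ht.2
  obtain ⟨hη0, -⟩ := hη t ht2
  obtain ⟨hσexp, -⟩ := hexp t ht2
  have habs : 2 ≤ |t| := by rw [abs_of_neg] <;> linarith
  set L := log |t| / |t| with hL
  have hL0 : 0 < L := div_pos (log_pos (by linarith)) (by linarith)
  have hL1 : L ≤ 1 := by
    rw [hL, div_le_one (by linarith)]
    linarith [log_le_sub_one_of_pos (show 0 < |t| by linarith)]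
  have h2 : (0 : ℝ) < √2 := by positivity
  refine ⟨?_, fun r hr => ?_⟩
  · have hpow : L ^ (σ / √2) * L ^ ((1 : ℝ) / 2) ≤ L ^ ((√2 + σ) / (2 * √2)) := by
      rw [← Real.rpow_add hL0]
      refine Real.rpow_le_rpow_of_exponent_ge hL0 hL1 ?_
      have h3 : (√2 + σ) / (2 * √2) = 1 / 2 + σ / √2 / 2 := by field_simp
      have h4 : 0 < σ / √2 := by positivity
      linarith
    calc |d t i| ≤ C * exp (-σ * η t) * (L ^ ((1 : ℝ) / 2) * CNorm N Φ I ψ + CNorm N Φ I g) :=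
          hbound
      _ ≤ C * ((C₁ + M) * L ^ (σ / √2)) *
          (L ^ ((1 : ℝ) / 2) * CNorm N Φ I ψ + CNorm N Φ I g) := by
          gcongr
          refine hσexp.trans ?_
          gcongr
          linarith
      _ = C * (C₁ + M) * (L ^ (σ / √2) * L ^ ((1 : ℝ) / 2)) * CNorm N Φ I ψ +
          C * (C₁ + M) * L ^ (σ / √2) * CNorm N Φ I g := by ring
      _ ≤ _ := by gcongr
  · have hpos := hΦ.pos S.hk t hr
    have hw := hΦ.w1_div_le S.hk hσ0 hσ2 hh ht2 hη0 hr hi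
    have hw0 := w1_pos (r - rho N k η γ h i t)
    rw [mul_div_assoc, abs_mul, abs_of_pos (div_pos hw0 hpos)]
    calc |d t i| * (w1 (r - rho N k η γ h i t) / Φ t r)
        ≤ C * exp (-σ * η t) * (L ^ ((1 : ℝ) / 2) * CNorm N Φ I ψ + CNorm N Φ I g) *
          (M * exp (σ * η t)) := by gcongr
      _ = C * M * (L ^ ((1 : ℝ) / 2) * CNorm N Φ I ψ + CNorm N Φ I g) *
          (exp (-σ * η t) * exp (σ * η t)) := by ring
      _ = C * M * (L ^ ((1 : ℝ) / 2) * CNorm N Φ I ψ + CNorm N Φ I g) := by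
          rw [← exp_add, neg_mul, neg_add_cancel, exp_zero, mul_one]
      _ ≤ C * (C₁ + M) * (L ^ ((1 : ℝ) / 2) * CNorm N Φ I ψ + CNorm N Φ I g) := by
          gcongr
          linarith
      _ = _ := by ring
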